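/- arXiv:2505.15382 — 3 statements merged into one kernel-verified Lean document; each statement's English description precedes it below -/
import Mathlib

section
/- Let X be an infinite dimensional real Banach space, ρ > 0, and let F̂ : closedBall(0,ρ) → X be a compact map (continuous, with relatively compact image). If inf_{‖x‖ = ρ} ‖F̂(x)‖ > 0, then there exist a real number λ⁺ > 0 and a point x⁺ with ‖x⁺‖ = ρ such that F̂(x⁺) = λ⁺ x⁺, and a real number λ⁻ < 0 and a point x⁻ with ‖x⁻‖ = ρ such that F̂(x⁻) = λ⁻ x⁻. -/
/-!
It suffices to find a positive eigenvalue, since `-F` satisfies the same hypotheses as `F`.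

Given `ε > 0` smaller than `inf ‖F‖` over the sphere, a partition of unity replaces `F` on the
closed ball by a continuous map `G` that is `ε`-close to it and takes values in a finite dimensional
subspace `V`. As `X` is infinite dimensional there is `e ∉ V`, and `H x = G x + (ρ - ‖x‖) e` vanishes
nowhere on the closed ball: inside because its `e`-component is nonzero, on the sphere because
`‖G x‖ > 0` there. Hence `ρ H / ‖H‖` is a continuous map from the closed ball of `V ⊕ ℝ e` into its
sphere. Its fixed point, given by Brouwer's theorem
(applied after precomposing with the radial retraction onto the ball), lies on the sphere, where `H = G`, so it is an
eigenvector of `G` with a positive eigenvalue (`exists_approx_eigenvector`). Letting `ε → 0` and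
using compactness yields an eigenvector of `F` (`exists_positive_eigenvalue`).

Brouwer's theorem is proved here by the analytic method of Milnor and Rogers. The core is that a
Euclidean ball has no `C¹` retraction `id + g` onto its sphere (`no_retraction`). For small `t ≥ 0`
the map `id + t g` is a bijection of the ball (`perturbation_bijOn`), so the integral of
`det (1 + t Dg)` over the ball is its volume. That determinant is a polynomial in `t`, hence by
Lagrange interpolation at small nodes (`det_extrapolation`) the integral at `t = 1` is the volume
too. But there the determinant vanishes identically, because the retraction has values in a sphere.
A continuous bounded self-map without fixed points could be smoothed, and following the ray from
the image of `x` through `x` up to the sphere would define such a retraction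
(`exists_fixedPoint_euclidean`).
-/

open Set Metric Filter Topology MeasureTheory

/-! ### Nonexistence of a smooth retraction onto the sphere -/

/-- Since `t ↦ det (1 + t A)` is a polynomial of degree at most `dim E`, its value at `1` is a fixed
affine combination of its values at the nodes `v 0, …, v (dim E)`, with weights independent of
`A`. -/
lemma det_extrapolation {E : Type*} [NormedAddCommGroup E] [NormedSpace ℝ E]
    [FiniteDimensional ℝ E] {v : ℕ → ℝ} (hv : Function.Injective v) :
    ∃ (n : ℕ) (c : ℕ → ℝ), ∑ i ∈ Finset.range n, c i = 1 ∧
      ∀ A : E →L[ℝ] E, ((1 : E →L[ℝ] E) + A).det =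
        ∑ i ∈ Finset.range n, c i * ((1 : E →L[ℝ] E) + v i • A).det := by
  classical
  set d := Module.finrank ℝ E with hd
  set s := Finset.range (d + 1) with hs
  have hvs : InjOn v s := hv.injOn
  refine ⟨d + 1, fun i => (Lagrange.basis s v i).eval 1, ?_, fun A => ?_⟩
  · rw [← Polynomial.eval_finsetSum, Lagrange.sum_basis hvs (by simp [hs]), Polynomial.eval_one]
  · let b := Module.finBasis ℝ E
    let M := LinearMap.toMatrix b b (A : E →ₗ[ℝ] E)
    let p : Polynomial ℝ := Matrix.det
      ((Polynomial.X : Polynomial ℝ) • M.map Polynomial.C + (1 : Matrix _ _ ℝ).map Polynomial.C)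
    have hdeg : p.degree < s.card := by
      have h1 : p.natDegree ≤ d := by
        simpa only [Fintype.card_fin] using Polynomial.natDegree_det_X_add_C_le M 1
      rw [hs, Finset.card_range]
      exact lt_of_le_of_lt Polynomial.degree_le_natDegree (by exact_mod_cast Nat.lt_succ_of_le h1)
    have heval : ∀ t : ℝ, p.eval t = ((1 : E →L[ℝ] E) + t • A).det := by
      intro t
      have h1 : p.eval t = (1 + t • M).det := by
        simp only [p]
        rw [← Polynomial.coe_evalRingHom, RingHom.map_det]
        congr 1
        ext i j
        rcases eq_or_ne i j with rfl | hij
        · simp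
          ring
        · simp [Matrix.one_apply_ne hij]
          ring
      rw [h1, ContinuousLinearMap.det, ← LinearMap.det_toMatrix b]
      congr 1
      simp [M, LinearMap.toMatrix_one]
    have h := Lagrange.eq_interpolate hvs hdeg
    have h2 := congrArg (Polynomial.eval 1) h
    rw [heval, one_smul] at h2
    rw [h2, Lagrange.interpolate_apply, Polynomial.eval_finsetSum]
    refine Finset.sum_congr rfl fun i _ => ?_
    rw [Polynomial.eval_mul, Polynomial.eval_C, heval, mul_comm]

/-- The extension by zero keeps the Lipschitz constant, because the segment from a point inside the
ball to a point outside meets the sphere, where `g` vanishes. -/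
lemma lipschitz_extend_zero {E : Type*} [NormedAddCommGroup E] [NormedSpace ℝ E]
    {g : E → E} {R : ℝ} {K : NNReal} (hL : LipschitzOnWith K g (closedBall 0 R))
    (h0 : ∀ x ∈ sphere (0 : E) R, g x = 0) :
    LipschitzWith K ((ball (0 : E) R).indicator g) := by
  classical
  have key : ∀ x ∈ ball (0 : E) R, ∀ y ∉ ball (0 : E) R, dist (g x) 0 ≤ K * dist x y := by
    intro x hx y hy
    obtain ⟨z, hz, hzR⟩ : ∃ z ∈ segment ℝ x y, ‖z‖ = R := by
      have hpre : IsPreconnected (segment ℝ x y) := (convex_segment x y).isPreconnected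
      have := hpre.intermediate_value (left_mem_segment ℝ x y) (right_mem_segment ℝ x y)
        (f := fun z => ‖z‖) continuous_norm.continuousOn
      rw [mem_ball_zero_iff] at hx hy
      obtain ⟨z, hz, hz'⟩ := this ⟨hx.le, not_lt.1 hy⟩
      exact ⟨z, hz, hz'⟩
    rw [← h0 z (by simpa using hzR)]
    refine (hL.dist_le_mul x (ball_subset_closedBall hx) z (by simp [hzR])).trans ?_
    gcongr
    have := dist_add_dist_of_mem_segment hz
    have := dist_nonneg (x := z) (y := y)
    linarith
  refine LipschitzWith.of_dist_le_mul fun x y => ?_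
  by_cases hx : x ∈ ball (0 : E) R <;> by_cases hy : y ∈ ball (0 : E) R
  · simpa [indicator_of_mem, hx, hy] using
      hL.dist_le_mul x (ball_subset_closedBall hx) y (ball_subset_closedBall hy)
  · rw [indicator_of_mem hx, indicator_of_notMem hy]
    exact key x hx y hy
  · rw [indicator_of_mem hy, indicator_of_notMem hx, dist_comm, dist_comm x]
    exact key y hy x hx
  · rw [indicator_of_notMem hy, indicator_of_notMem hx, dist_self]
    positivity

/-- Surjectivity comes from the contraction principle: for `y` in the ball, `x ↦ y - t g x`, with `g`
extended by zero, has a fixed point, and it lies in the ball since outside it would equal `y`. -/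
lemma perturbation_bijOn {E : Type*} [NormedAddCommGroup E] [NormedSpace ℝ E] [CompleteSpace E]
    {g : E → E} {R : ℝ} {K : NNReal} (hL : LipschitzOnWith K g (closedBall 0 R))
    (h0 : ∀ x ∈ sphere (0 : E) R, g x = 0) (hR : ∀ x ∈ closedBall (0 : E) R, ‖x + g x‖ ≤ R)
    {t : NNReal} (ht1 : t < 1) (htK : t * K < 1) :
    BijOn (fun x => x + (t : ℝ) • g x) (ball 0 R) (ball 0 R) := by
  set G := (ball (0 : E) R).indicator g with hG
  have hGL := lipschitz_extend_zero hL h0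
  have htG : LipschitzWith (t * K) (fun x => (t : ℝ) • G x) := by
    refine LipschitzWith.of_dist_le_mul fun x y => ?_
    rw [dist_smul₀, NNReal.coe_mul, mul_assoc]
    have := hGL.dist_le_mul x y
    simp only [NNReal.norm_eq]
    gcongr
  refine ⟨fun x hx => ?_, fun x hx y hy hxy => ?_, fun y hy => ?_⟩
  · rw [mem_ball_zero_iff] at hx ⊢
    have h1 : x + (t : ℝ) • g x = (1 - (t : ℝ)) • x + (t : ℝ) • (x + g x) := by module
    have ht1' : (t : ℝ) < 1 := by exact_mod_cast ht1
    have h2 := hR x (by simpa using hx.le)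
    change ‖x + (t : ℝ) • g x‖ < R
    rw [h1]
    refine (norm_add_le _ _).trans_lt ?_
    rw [norm_smul, norm_smul, Real.norm_of_nonneg (by linarith), NNReal.norm_eq]
    nlinarith [t.coe_nonneg, mul_le_mul_of_nonneg_left h2 t.coe_nonneg]
  · have h1 := htG.dist_le_mul x y
    simp only [hG, indicator_of_mem hx, indicator_of_mem hy] at h1
    have h2 : dist ((t : ℝ) • g x) ((t : ℝ) • g y) = dist x y := by
      have hxy' : x + (t : ℝ) • g x = y + (t : ℝ) • g y := hxy
      rw [dist_eq_norm, dist_eq_norm, ← norm_neg (x - y)]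
      congr 1
      rw [neg_sub, sub_eq_sub_iff_add_eq_add, add_comm, hxy', add_comm]
    have h3 : ((t * K : NNReal) : ℝ) < 1 := by exact_mod_cast htK
    rw [h2] at h1
    by_contra hne
    have := dist_pos.2 hne
    nlinarith
  · have hc : ContractingWith (t * K) (fun x => y - (t : ℝ) • G x) := by
      refine ⟨htK, LipschitzWith.of_dist_le_mul fun a b => ?_⟩
      rw [dist_sub_left]
      exact htG.dist_le_mul a b
    set x := ContractingWith.fixedPoint _ hc
    have hx : y - (t : ℝ) • G x = x := hc.fixedPoint_isFixedPt
    by_cases hxb : x ∈ ball (0 : E) R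
    · refine ⟨x, hxb, ?_⟩
      rw [hG, indicator_of_mem hxb] at hx
      change x + (t : ℝ) • g x = y
      exact (sub_eq_iff_eq_add.1 hx).symm
    · rw [hG, indicator_of_notMem hxb, smul_zero, sub_zero] at hx
      exact absurd (hx ▸ hy) hxb

/-- There is no `C¹` retraction of a Euclidean closed ball onto its sphere; the retraction is written
as `x ↦ x + g x`. -/
lemma no_retraction {E : Type*} [NormedAddCommGroup E] [InnerProductSpace ℝ E]
    [FiniteDimensional ℝ E] [MeasurableSpace E] [BorelSpace E] {g : E → E} {R : ℝ} (hRpos : 0 < R)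
    (hg : ∀ x ∈ closedBall (0 : E) R, ContDiffAt ℝ 1 g x)
    (h0 : ∀ x ∈ sphere (0 : E) R, g x = 0)
    (hr : ∀ x ∈ closedBall (0 : E) R, ‖x + g x‖ = R) : False := by
  have hproper : ProperSpace E := FiniteDimensional.proper ℝ E
  have hcont : ContinuousOn (fderiv ℝ g) (closedBall 0 R) := fun x hx =>
    ((hg x hx).continuousAt_fderiv one_ne_zero).continuousWithinAt
  obtain ⟨C, hC⟩ := (isCompact_closedBall (0 : E) R).exists_bound_of_continuousOn hcont
  set K : NNReal := C.toNNReal + 1 with hK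
  have hCK : ∀ x ∈ closedBall (0 : E) R, ‖fderiv ℝ g x‖₊ ≤ K := fun x hx => by
    rw [← NNReal.coe_le_coe, coe_nnnorm, hK]
    push_cast
    linarith [hC x hx, Real.le_coe_toNNReal C]
  have hL : LipschitzOnWith K g (closedBall 0 R) :=
    Convex.lipschitzOnWith_of_nnnorm_fderiv_le
      (fun x hx => (hg x hx).differentiableAt one_ne_zero) hCK (convex_closedBall _ _)
  -- Positivity of the determinant near the identity removes the absolute value in the
  -- change of variables formula.
  obtain ⟨ε, hε, hdet⟩ : ∃ ε > 0, ∀ A : E →L[ℝ] E, ‖A‖ < ε → 0 < ((1 : E →L[ℝ] E) + A).det := by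
    have hc : ContinuousAt (fun A : E →L[ℝ] E => ((1 : E →L[ℝ] E) + A).det) 0 :=
      (ContinuousLinearMap.continuous_det.comp (continuous_const.add continuous_id)).continuousAt
    have h1 : (0 : ℝ) < ((1 : E →L[ℝ] E) + 0).det := by
      rw [add_zero, ContinuousLinearMap.det, ContinuousLinearMap.toLinearMap_one, map_one]
      exact one_pos
    obtain ⟨ε, hε, h⟩ := Metric.eventually_nhds_iff.1 (hc.eventually (lt_mem_nhds h1))
    exact ⟨ε, hε, fun A hA => h (by simpa using hA)⟩
  obtain ⟨τ, hτ0, hτ1, hτK, hτε⟩ : ∃ τ : NNReal, 0 < τ ∧ τ < 1 ∧ τ * K < 1 ∧ (τ : ℝ) * K < ε := by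
    have hK0 : 0 < K := by positivity
    have hK1 : 1 ≤ K := by rw [hK]; exact le_add_self
    refine ⟨min 1 ε.toNNReal / (2 * K), by have := Real.toNNReal_pos.2 hε; positivity, ?_, ?_, ?_⟩
    · rw [div_lt_one (by positivity)]
      calc min 1 ε.toNNReal ≤ 1 := min_le_left _ _
        _ < 2 * K := lt_of_lt_of_le one_lt_two (by simpa using mul_le_mul_right hK1 2)
    · have : min 1 ε.toNNReal / (2 * K) * K = min 1 ε.toNNReal / 2 := by field_simp
      rw [this, div_lt_one two_pos]
      exact (min_le_left _ _).trans_lt one_lt_two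
    · have : ((min 1 ε.toNNReal / (2 * K) : NNReal) : ℝ) * K = min 1 ε / 2 := by
        have : (K : ℝ) ≠ 0 := by exact_mod_cast hK0.ne'
        push_cast
        rw [Real.coe_toNNReal _ hε.le]
        field_simp
      rw [this]
      linarith [min_le_right 1 ε]
  have hvol : ∀ t : NNReal, t ≤ τ →
      ∫ x in ball (0 : E) R, ((1 : E →L[ℝ] E) + (t : ℝ) • fderiv ℝ g x).det
        = (volume (ball (0 : E) R)).toReal := by
    intro t ht
    have hb := perturbation_bijOn hL h0 (fun x hx => (hr x hx).le) (ht.trans_lt hτ1)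
      ((mul_le_mul_left ht K).trans_lt hτK)
    have hd : ∀ x ∈ ball (0 : E) R, HasFDerivWithinAt (fun x => x + (t : ℝ) • g x)
        ((1 : E →L[ℝ] E) + (t : ℝ) • fderiv ℝ g x) (ball 0 R) x := fun x hx => by
      have h1 := ((hg x (ball_subset_closedBall hx)).differentiableAt one_ne_zero).hasFDerivAt
      exact ((hasFDerivAt_id x).add (h1.const_smul (t : ℝ))).hasFDerivWithinAt
    have h1 := integral_image_eq_integral_abs_det_fderiv_smul (volume : Measure E)
      measurableSet_ball hd hb.injOn (fun _ => (1 : ℝ))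
    rw [hb.image_eq] at h1
    simp only [smul_eq_mul, mul_one, integral_const, measureReal_restrict_apply_univ] at h1
    rw [← Measure.real, h1]
    refine setIntegral_congr_fun measurableSet_ball fun x hx => ?_
    refine (abs_of_pos (hdet _ ?_)).symm
    rw [norm_smul, NNReal.norm_eq]
    have h2 : ‖fderiv ℝ g x‖ ≤ K := by exact_mod_cast hCK x (ball_subset_closedBall hx)
    have h3 : (t : ℝ) ≤ τ := by exact_mod_cast ht
    calc (t : ℝ) * ‖fderiv ℝ g x‖ ≤ τ * K := by gcongr
      _ < ε := hτε
  -- Differentiating `‖x + g x‖² = R²` shows that the range of the derivative is orthogonal to the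
  -- nonzero vector `x + g x`.
  have hdet0 : ∀ x ∈ ball (0 : E) R, ((1 : E →L[ℝ] E) + fderiv ℝ g x).det = 0 := by
    intro x hx
    have h1 := ((hg x (ball_subset_closedBall hx)).differentiableAt one_ne_zero).hasFDerivAt
    have h2 : HasFDerivAt (fun x => x + g x) ((1 : E →L[ℝ] E) + fderiv ℝ g x) x :=
      (hasFDerivAt_id x).add h1
    have h3 := h2.inner ℝ h2
    have h4 : (fun y => inner ℝ (y + g y) (y + g y)) =ᶠ[𝓝 x] fun _ => R ^ 2 := by
      filter_upwards [isOpen_ball.mem_nhds hx] with y hy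
      rw [real_inner_self_eq_norm_sq, hr y (ball_subset_closedBall hy)]
    have h5 := (h3.congr_of_eventuallyEq h4.symm).unique (hasFDerivAt_const (R ^ 2) x)
    by_contra hne
    have hu : IsUnit (LinearMap.det (((1 : E →L[ℝ] E) + fderiv ℝ g x : E →L[ℝ] E) : E →ₗ[ℝ] E)) :=
      isUnit_iff_ne_zero.2 hne
    have hsurj := LinearMap.range_eq_top.1
      ((LinearMap.isUnit_iff_range_eq_top _).1 ((LinearMap.isUnit_iff_isUnit_det _).2 hu))
    obtain ⟨w, hw⟩ := hsurj (x + g x)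
    have hw' : ((1 : E →L[ℝ] E) + fderiv ℝ g x) w = x + g x := hw
    have h6 := DFunLike.congr_fun h5 w
    simp only [ContinuousLinearMap.comp_apply, ContinuousLinearMap.prod_apply,
      fderivInnerCLM_apply, hw', zero_apply] at h6
    rw [real_inner_self_eq_norm_sq, hr x (ball_subset_closedBall hx)] at h6
    nlinarith [pow_pos hRpos 2]
  -- Interpolation nodes in `(0, τ]`, where the volume identity holds.
  let v : ℕ → NNReal := fun i => τ / (i + 1)
  have hv : Function.Injective fun i => (v i : ℝ) := by
    intro i j hij
    have hij' : v i = v j := NNReal.coe_injective hij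
    simp only [v] at hij'
    rw [div_eq_div_iff (by positivity) (by positivity)] at hij'
    have := mul_left_cancel₀ hτ0.ne' hij'
    exact_mod_cast (add_right_cancel this).symm
  obtain ⟨n, c, hc1, hc⟩ := det_extrapolation (E := E) hv
  have hint : ∀ t : ℝ, IntegrableOn
      (fun x => ((1 : E →L[ℝ] E) + t • fderiv ℝ g x).det) (ball (0 : E) R) := fun t => by
    refine IntegrableOn.mono_set ?_ ball_subset_closedBall
    refine ContinuousOn.integrableOn_compact (isCompact_closedBall _ _) ?_
    exact ContinuousLinearMap.continuous_det.comp_continuousOn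
      (continuousOn_const.add (hcont.const_smul t))
  have hzero : ∫ x in ball (0 : E) R, ((1 : E →L[ℝ] E) + fderiv ℝ g x).det = 0 := by
    rw [setIntegral_congr_fun measurableSet_ball hdet0]
    simp
  rw [integral_congr_ae (ae_of_all _ fun x => hc (fderiv ℝ g x))] at hzero
  rw [integral_finsetSum _ fun i _ => (hint (v i)).const_mul (c i)] at hzero
  simp_rw [integral_const_mul] at hzero
  rw [Finset.sum_congr rfl fun i _ => by rw [hvol (v i) (div_le_self (by positivity) (by simp))],
    ← Finset.sum_mul, hc1, one_mul] at hzero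
  have hpos : 0 < (volume (ball (0 : E) R)).toReal :=
    ENNReal.toReal_pos (measure_ball_pos _ _ hRpos).ne' measure_ball_lt_top.ne
  exact hpos.ne' hzero

/-! ### Brouwer's fixed point theorem -/

/-- Brouwer's theorem in Euclidean space, for continuous self-maps of the whole space with bounded
range. -/
lemma exists_fixedPoint_euclidean {E : Type*} [NormedAddCommGroup E] [InnerProductSpace ℝ E]
    [FiniteDimensional ℝ E] {f : E → E} (hf : Continuous f) {C : ℝ} (hC : ∀ x, ‖f x‖ ≤ C) :
    ∃ x, f x = x := by
  by_contra! hne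
  have hproper : ProperSpace E := FiniteDimensional.proper ℝ E
  have hC0 : 0 ≤ C := (norm_nonneg _).trans (hC 0)
  set R := C + 1 with hR
  have hRpos : 0 < R := by positivity
  obtain ⟨z, hz, hmin⟩ := (isCompact_closedBall (0 : E) R).exists_isMinOn
    (nonempty_closedBall.2 hRpos.le) (f := fun x => dist (f x) x) (by fun_prop)
  have hm : 0 < dist (f z) z := dist_pos.2 (hne z)
  obtain ⟨p, hp, hpf, -⟩ := hf.exists_contDiff_approx 1
    (ε := fun _ => min (dist (f z) z) 1) continuous_const (fun _ => lt_min hm one_pos)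
  have hpR : ∀ x, ‖p x‖ < R := fun x => by
    have h1 := (hpf x).trans_le (min_le_right _ _)
    rw [dist_eq_norm] at h1
    have h2 := norm_le_norm_add_norm_sub (f x) (p x)
    linarith [hC x, norm_sub_rev (p x) (f x)]
  have hpx : ∀ x ∈ closedBall (0 : E) R, x - p x ≠ 0 := fun x hx h => by
    have h1 := (hpf x).trans_le (min_le_left _ _)
    have h2 : dist (f z) z ≤ dist (f x) x := hmin hx
    rw [← sub_eq_zero.1 h, dist_comm] at h1
    exact absurd h2 (not_le.2 h1)
  -- `x + s x • u x` is the point where the ray from `p x` through `x` leaves the ball: `s x` is the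
  -- larger root of `‖x + s • u x‖² = R²`, and `D x` is a quarter of the discriminant. On the sphere
  -- the larger root is `0` because `b x > 0` there.
  let u : E → E := fun x => x - p x
  have hu : ContDiff ℝ 1 u := contDiff_id.sub (by simpa using hp)
  let b : E → ℝ := fun x => inner ℝ x (u x)
  have hb : ContDiff ℝ 1 b := contDiff_id.inner ℝ hu
  let D : E → ℝ := fun x => b x ^ 2 + ‖u x‖ ^ 2 * (R ^ 2 - ‖x‖ ^ 2)
  have hD : ContDiff ℝ 1 D :=
    (hb.pow 2).add ((hu.norm_sq ℝ).mul (contDiff_const.sub (contDiff_id.norm_sq ℝ)))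
  have hbpos : ∀ x ∈ sphere (0 : E) R, 0 < b x := fun x hx => by
    rw [mem_sphere_zero_iff_norm] at hx
    have h1 : b x = ‖x‖ ^ 2 - inner ℝ x (p x) := by
      simp only [b, u]
      rw [inner_sub_right, real_inner_self_eq_norm_sq]
    have h2 := real_inner_le_norm x (p x)
    rw [h1]
    rw [hx] at h2 ⊢
    nlinarith [hpR x]
  have hDpos : ∀ x ∈ closedBall (0 : E) R, 0 < D x := fun x hx => by
    have hun : 0 < ‖u x‖ := norm_pos_iff.2 (hpx x hx)
    rw [mem_closedBall_zero_iff] at hx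
    rcases hx.lt_or_eq with h | h
    · have : 0 < R ^ 2 - ‖x‖ ^ 2 := by nlinarith [norm_nonneg x]
      simp only [D]
      positivity
    · have := hbpos x (by simpa using h)
      simp only [D, h, sub_self, mul_zero, add_zero]
      positivity
  let s : E → ℝ := fun x => (√(D x) - b x) / ‖u x‖ ^ 2
  borelize E
  refine no_retraction (g := fun x => s x • u x) hRpos (fun x hx => ?_) (fun x hx => ?_)
    (fun x hx => ?_)
  · have hun : ‖u x‖ ^ 2 ≠ 0 := by simpa using hpx x hx
    exact (((hD.contDiffAt.sqrt (hDpos x hx).ne').sub hb.contDiffAt).div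
      (hu.norm_sq ℝ).contDiffAt hun).smul hu.contDiffAt
  · have h1 := hbpos x hx
    rw [mem_sphere_zero_iff_norm] at hx
    simp [s, D, hx, Real.sqrt_sq h1.le]
  · have hun : 0 < ‖u x‖ ^ 2 := pow_pos (norm_pos_iff.2 (hpx x hx)) 2
    have hq := Real.sq_sqrt (hDpos x hx).le
    have hs : s x * ‖u x‖ ^ 2 = √(D x) - b x := div_mul_cancel₀ _ hun.ne'
    have h1 : ‖x + s x • u x‖ ^ 2 = ‖x‖ ^ 2 + 2 * (s x * b x) + s x ^ 2 * ‖u x‖ ^ 2 := by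
      rw [norm_add_sq_real, inner_smul_right, norm_smul, mul_pow, Real.norm_eq_abs, sq_abs]
    have h2 : ‖x + s x • u x‖ ^ 2 = R ^ 2 := by
      have h3 : D x = b x ^ 2 + ‖u x‖ ^ 2 * (R ^ 2 - ‖x‖ ^ 2) := rfl
      rw [h1]
      refine mul_left_cancel₀ hun.ne' ?_
      linear_combination (s x * ‖u x‖ ^ 2 + √(D x) + b x) * hs + hq + h3
    exact (sq_eq_sq₀ (norm_nonneg _) hRpos.le).1 h2

lemma exists_fixedPoint_of_finiteDimensional {W : Type*} [NormedAddCommGroup W] [NormedSpace ℝ W]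
    [FiniteDimensional ℝ W] {f : W → W} (hf : Continuous f) {C : ℝ} (hC : ∀ x, ‖f x‖ ≤ C) :
    ∃ x, f x = x := by
  let e := toEuclidean (E := W)
  let L : W →L[ℝ] EuclideanSpace ℝ (Fin (Module.finrank ℝ W)) := e
  obtain ⟨y, hy⟩ := exists_fixedPoint_euclidean (f := fun y => e (f (e.symm y)))
    (by fun_prop) (C := ‖L‖ * C) fun y =>
      (L.le_opNorm _).trans (mul_le_mul_of_nonneg_left (hC _) (norm_nonneg _))
  exact ⟨e.symm y, by rw [e.eq_symm_apply]; exact hy⟩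

/-! ### Approximate eigenvectors and passage to the limit -/

/-- The radial retraction of `X` onto the closed ball of radius `ρ > 0`. -/
noncomputable def radialProj {X : Type*} [NormedAddCommGroup X] [NormedSpace ℝ X] (ρ : ℝ) (x : X) :
    X := (ρ / max ρ ‖x‖) • x

section
variable {X : Type*} [NormedAddCommGroup X] [NormedSpace ℝ X] {ρ : ℝ}

lemma continuous_radialProj (hρ : 0 < ρ) : Continuous (radialProj ρ : X → X) := by
  have : ∀ x : X, max ρ ‖x‖ ≠ 0 := fun x => (lt_max_of_lt_left hρ).ne'
  unfold radialProj
  fun_prop (disch := assumption)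

lemma radialProj_mem (hρ : 0 < ρ) (x : X) : radialProj ρ x ∈ closedBall (0 : X) ρ := by
  have h : 0 < max ρ ‖x‖ := lt_max_of_lt_left hρ
  rw [mem_closedBall_zero_iff, radialProj, norm_smul, Real.norm_of_nonneg (by positivity),
    div_mul_eq_mul_div, div_le_iff₀ h]
  gcongr
  exact le_max_right _ _

lemma radialProj_of_norm_eq (hρ : 0 < ρ) {x : X} (hx : ‖x‖ = ρ) : radialProj ρ x = x := by
  rw [radialProj, hx, max_self, div_self hρ.ne', one_smul]

/-- An approximate eigenvector: a point `x` of the sphere that is a positive multiple of some `y`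
within `ε` of `F x`. -/
lemma exists_approx_eigenvector (hdim : ¬ FiniteDimensional ℝ X) (hρ : 0 < ρ) {F : X → X}
    (hF : ContinuousOn F (closedBall (0 : X) ρ))
    (hK : IsCompact (closure (F '' closedBall (0 : X) ρ))) {δ : ℝ}
    (hδ : ∀ x, ‖x‖ = ρ → δ ≤ ‖F x‖) {ε : ℝ} (hε : 0 < ε) (hεδ : ε < δ) :
    ∃ x y : X, ‖x‖ = ρ ∧ dist y (F x) < ε ∧ x = (ρ / ‖y‖) • y := by
  obtain ⟨t, -, htfin, htcov⟩ := hK.finite_cover_balls hε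
  let V := Submodule.span ℝ t
  have : FiniteDimensional ℝ V := FiniteDimensional.span_of_finite ℝ htfin
  obtain ⟨G, hG⟩ : ∃ G : C(closedBall (0 : X) ρ, X),
      ∀ x : closedBall (0 : X) ρ, G x ∈ ball (F x) ε ∩ (V : Set X) := by
    refine exists_continuous_forall_mem_convex_of_local_const
      (fun x => (convex_ball _ _).inter V.convex) fun x => ?_
    obtain ⟨c, hct, hc⟩ := mem_iUnion₂.1 (htcov (subset_closure (mem_image_of_mem F x.2)))
    have hFx : Continuous fun y : closedBall (0 : X) ρ => F y := hF.domRestrict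
    refine ⟨c, ?_⟩
    filter_upwards [hFx.continuousAt.eventually (isOpen_ball.mem_nhds hc)] with y hy
    exact ⟨by rw [mem_ball, dist_comm]; exact hy, Submodule.subset_span hct⟩
  -- The extra dimension: this is the only use of the infinite dimension of `X`.
  obtain ⟨e, he⟩ : ∃ e : X, e ∉ V := by
    by_contra! h
    refine hdim (Module.finite_def.2 ?_)
    rw [← Submodule.eq_top_iff'.2 h]
    exact Submodule.fg_span htfin
  let W := V ⊔ Submodule.span ℝ {e}
  let π : X → closedBall (0 : X) ρ := fun x => ⟨radialProj ρ x, radialProj_mem hρ x⟩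
  have hπ : Continuous π := (continuous_radialProj hρ).subtype_mk _
  let H : X → X := fun x => G (π x) + (ρ - ‖(π x : X)‖) • e
  have hHc : Continuous H := by fun_prop
  have hHW : ∀ x, H x ∈ W := fun x => Submodule.add_mem_sup (hG _).2
    (Submodule.smul_mem _ _ (Submodule.mem_span_singleton_self e))
  have hH0 : ∀ x, H x ≠ 0 := fun x hx => by
    by_cases h : ρ - ‖(π x : X)‖ = 0
    · have h1 := (hG (π x)).1
      have h2 : G (π x) = 0 := by simpa [H, h] using hx
      rw [h2, mem_ball, dist_zero_left] at h1
      linarith [hδ (π x) (sub_eq_zero.1 h).symm]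
    · refine he ((Submodule.smul_mem_iff V h).1 ?_)
      rw [eq_neg_of_add_eq_zero_right hx]
      exact V.neg_mem (hG _).2
  let f : W → W := fun w => (ρ / ‖H w‖) • ⟨H w, hHW w⟩
  have hf : Continuous f := by
    have h1 : Continuous fun w : W => H w := hHc.comp continuous_subtype_val
    exact (continuous_const.div h1.norm fun w => norm_ne_zero_iff.2 (hH0 w)).smul
      (h1.subtype_mk _)
  have hfn : ∀ w, ‖f w‖ = ρ := fun w => by
    have h1 : 0 < ‖H w‖ := norm_pos_iff.2 (hH0 w)
    change ‖(ρ / ‖H w‖) • (⟨H w, hHW w⟩ : W)‖ = ρ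
    rw [norm_smul, Real.norm_of_nonneg (by positivity), Submodule.coe_norm]
    exact div_mul_cancel₀ _ h1.ne'
  obtain ⟨w, hw⟩ := exists_fixedPoint_of_finiteDimensional hf fun w => (hfn w).le
  have hwn : ‖(w : X)‖ = ρ := by rw [← Submodule.coe_norm, ← hw, hfn]
  have hπw : (π w : X) = w := radialProj_of_norm_eq hρ hwn
  have hHw : H w = G (π w) := by simp [H, hπw, hwn]
  refine ⟨w, H w, hwn, ?_, (congrArg Subtype.val hw).symm⟩
  rw [hHw]
  have := (hG (π w)).1
  rwa [hπw] at this

lemma exists_positive_eigenvalue (hdim : ¬ FiniteDimensional ℝ X) (hρ : 0 < ρ) {F : X → X}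
    (hF : ContinuousOn F (closedBall (0 : X) ρ))
    (hK : IsCompact (closure (F '' closedBall (0 : X) ρ))) {δ : ℝ} (hδ0 : 0 < δ)
    (hδ : ∀ x, ‖x‖ = ρ → δ ≤ ‖F x‖) :
    ∃ l : ℝ, 0 < l ∧ ∃ x : X, ‖x‖ = ρ ∧ F x = l • x := by
  obtain ⟨ε, -, hε, hε0⟩ := exists_seq_strictAnti_tendsto' hδ0
  choose x y hx hy hxy using fun n =>
    exists_approx_eigenvector hdim hρ hF hK hδ (hε n).1 (hε n).2
  have hxb : ∀ n, x n ∈ closedBall (0 : X) ρ := fun n => by simp [hx n]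
  obtain ⟨z, -, φ, hφ, hz⟩ := hK.tendsto_subseq
    (x := fun n => F (x n)) fun n => subset_closure (mem_image_of_mem F (hxb n))
  have hδz : δ ≤ ‖z‖ := ge_of_tendsto' hz.norm fun n => hδ _ (hx _)
  have hz0 : 0 < ‖z‖ := hδ0.trans_le hδz
  have hdist : Tendsto (fun n => dist (F (x (φ n))) (y (φ n))) atTop (𝓝 0) :=
    squeeze_zero (fun _ => dist_nonneg) (fun n => by rw [dist_comm]; exact (hy _).le)
      (hε0.comp hφ.tendsto_atTop)
  have hyz : Tendsto (fun n => y (φ n)) atTop (𝓝 z) := (tendsto_iff_of_dist hdist).1 hz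
  have hxz : Tendsto (fun n => x (φ n)) atTop (𝓝 ((ρ / ‖z‖) • z)) := by
    refine ((tendsto_const_nhds.div hyz.norm hz0.ne').smul hyz).congr fun n => ?_
    exact (hxy (φ n)).symm
  have hn : ‖(ρ / ‖z‖) • z‖ = ρ := by
    rw [norm_smul, Real.norm_of_nonneg (by positivity), div_mul_cancel₀ _ hz0.ne']
  have hFz : F ((ρ / ‖z‖) • z) = z := by
    have h1 := (hF ((ρ / ‖z‖) • z) (by simp [hn])).tendsto.comp
      (tendsto_nhdsWithin_iff.2 ⟨hxz, Eventually.of_forall fun n => hxb (φ n)⟩)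
    exact tendsto_nhds_unique h1 hz
  refine ⟨‖z‖ / ρ, by positivity, (ρ / ‖z‖) • z, hn, ?_⟩
  rw [hFz, smul_smul, div_mul_div_cancel₀ hρ.ne', div_self hz0.ne', one_smul]

end

theorem birkhoff_kellogg
    (X : Type*) [NormedAddCommGroup X] [NormedSpace ℝ X] [CompleteSpace X]
    (hdim : ¬ FiniteDimensional ℝ X)
    (ρ : ℝ) (hρ : 0 < ρ)
    (F : X → X)
    (hF_cont : ContinuousOn F (Metric.closedBall (0 : X) ρ))
    (hF_cpt : IsCompact (closure (F '' Metric.closedBall (0 : X) ρ)))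
    (hinf : 0 < ⨅ x : Metric.sphere (0 : X) ρ, ‖F (x : X)‖) :
    (∃ lamp : ℝ, 0 < lamp ∧ ∃ xp : X, ‖xp‖ = ρ ∧ F xp = lamp • xp) ∧
    (∃ lamn : ℝ, lamn < 0 ∧ ∃ xn : X, ‖xn‖ = ρ ∧ F xn = lamn • xn) := by
  have hδ : ∀ x, ‖x‖ = ρ → ⨅ x : Metric.sphere (0 : X) ρ, ‖F (x : X)‖ ≤ ‖F x‖ := fun x hx =>
    ciInf_le (f := fun x : Metric.sphere (0 : X) ρ => ‖F (x : X)‖)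
      ⟨0, by rintro _ ⟨y, rfl⟩; exact norm_nonneg _⟩ ⟨x, by simpa using hx⟩
  refine ⟨exists_positive_eigenvalue hdim hρ hF_cont hF_cpt hinf hδ, ?_⟩
  have hcpt : IsCompact (closure ((fun x => -F x) '' Metric.closedBall (0 : X) ρ)) := by
    have h1 : (fun x => -F x) '' Metric.closedBall (0 : X) ρ
        = (Homeomorph.neg X) '' (F '' Metric.closedBall (0 : X) ρ) := by
      rw [image_image]; rfl
    rw [h1, ← Homeomorph.image_closure]
    exact hF_cpt.image (Homeomorph.neg X).continuous
  obtain ⟨l, hl, x, hx, hFx⟩ := exists_positive_eigenvalue hdim hρ hF_cont.neg hcpt hinf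
    (fun x hx => (hδ x hx).trans_eq (norm_neg _).symm)
  exact ⟨-l, neg_lt_zero.2 hl, x, hx, by rw [neg_smul, ← hFx, Pi.neg_apply, neg_neg]⟩
end

section
/- Under assumptions (1)–(4) and assumption (5b) — there exists t_ρ ∈ [0,1] with F_low(t_ρ) > 0 — there exist λ_ρ⁺ > 0, λ_ρ⁻ < 0 and functions u⁺, u⁻ ∈ C([0,1]) with ‖u⁺‖_∞ = ‖u⁻‖_∞ = ρ such that u⁺(t) = λ_ρ⁺ ∫₀¹ k(t,s) f(s, u⁺(s), H[u⁺]) ds and u⁻(t) = λ_ρ⁻ ∫₀¹ k(t,s) f(s, u⁻(s), H[u⁻]) ds for all t ∈ [0,1]. -/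
/-!
The nonlinear integral operator `T u (t) = ∫ k(t,s) f(s, u(s), H[u]) ds` is continuous, has relatively
compact range by Arzelà–Ascoli, and satisfies `‖T u‖ ≥ T u (tρ) ≥ F_low(tρ) > 0`. Hence
`u ↦ ± ρ T u / ‖T u‖` is a compact map into the sphere of radius `ρ`, and a fixed point of it is an
eigenfunction with eigenvalue `± ρ / ‖T u‖` (`exists_eigenvector`). To have `T` defined on the whole
space, its argument is first sent to the ball of radius `ρ` by radial retraction, which does not
affect functions of norm `ρ`.

The fixed point comes from Schauder's theorem (`schauder`), reduced to Brouwer's theorem (`brouwer`)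
by approximating points of the compact set by convex combinations of a finite net. A fixed-point-free bounded continuous
map of `ℝⁿ` would, after cutoff and smoothing, produce a `C¹` retraction of a ball onto its sphere.
This is excluded (`no_retraction`) by the Milnor–Rogers argument: the integral of
`det (1 + t Dg)` over the ball is polynomial in `t`, equal to the volume for small `t`, and zero for
`t = 1`.
-/

open MeasureTheory Set

/-- `t ↦ det (1 + t A)` is a polynomial of degree at most `n`, so Lagrange interpolation recovers its
value at `t = 1` from its values at any `n + 1` distinct nodes, with weights that do not depend
on `A`. -/
theorem det_weights (n : ℕ) (r : Fin (n + 1) → ℝ) (hr : Function.Injective r) :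
    ∃ w : Fin (n + 1) → ℝ, ∀ A : EuclideanSpace ℝ (Fin n) →L[ℝ] EuclideanSpace ℝ (Fin n),
      (ContinuousLinearMap.id ℝ _ + A).det
        = ∑ i, w i * (ContinuousLinearMap.id ℝ _ + r i • A).det := by
  refine ⟨fun i => (Lagrange.basis Finset.univ r i).eval 1, fun A => ?_⟩
  let b := (EuclideanSpace.basisFun (Fin n) ℝ).toBasis
  let M := LinearMap.toMatrix b b A.toLinearMap
  let P : Polynomial ℝ :=
    Matrix.det ((Polynomial.X : Polynomial ℝ) • M.map Polynomial.C
      + (1 : Matrix (Fin n) (Fin n) ℝ).map Polynomial.C)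
  have hP (t : ℝ) : P.eval t = (ContinuousLinearMap.id ℝ _ + t • A).det := by
    have h1 : P.eval t = (t • M + 1).det := by
      rw [← Polynomial.coe_evalRingHom, RingHom.map_det]
      congr 1
      ext i j
      simp [Matrix.one_apply]
      split_ifs <;> simp [mul_comm]
    have h2 : (ContinuousLinearMap.id ℝ (EuclideanSpace ℝ (Fin n)) + t • A).det
        = LinearMap.det (LinearMap.id + t • A.toLinearMap) := rfl
    rw [h1, h2, ← LinearMap.det_toMatrix b, map_add, map_smul, LinearMap.toMatrix_id, add_comm]
  have hdeg : P.degree < (Finset.univ : Finset (Fin (n + 1))).card := by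
    have := Polynomial.natDegree_det_X_add_C_le M 1
    refine lt_of_le_of_lt Polynomial.degree_le_natDegree ?_
    simp only [Fintype.card_fin, Finset.card_univ] at this ⊢
    exact_mod_cast Nat.lt_succ_of_le this
  have := congrArg (Polynomial.eval 1) (Lagrange.eq_interpolate (v := r) hr.injOn hdeg)
  rw [hP, one_smul, Lagrange.interpolate_apply, Polynomial.eval_finsetSum] at this
  rw [this]
  refine Finset.sum_congr rfl fun i _ => ?_
  rw [Polynomial.eval_mul, Polynomial.eval_C, hP, mul_comm]

section
variable {E : Type*} [NormedAddCommGroup E] [NormedSpace ℝ E]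

/-- A map that is Lipschitz on a closed ball and vanishes on the bounding sphere stays Lipschitz, with
the same constant, when extended by zero. -/
theorem lipschitz_indicator {R : ℝ} {g : E → E} {K : NNReal}
    (hg : LipschitzOnWith K g (Metric.closedBall 0 R)) (h0 : ∀ x, ‖x‖ = R → g x = 0) :
    LipschitzWith K ((Metric.closedBall 0 R).indicator g) := by
  classical
  -- a segment leaving the ball meets the sphere, where `g` vanishes
  have key (x y : E) (hx : ‖x‖ ≤ R) (hy : R < ‖y‖) : dist (g x) 0 ≤ K * dist x y := by
    have hc : ContinuousOn (fun s : ℝ => ‖AffineMap.lineMap x y s‖) (Icc 0 1) := by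
      have : Continuous (fun s : ℝ => ‖AffineMap.lineMap x y s‖) :=
        AffineMap.lineMap_continuous.norm
      exact this.continuousOn
    obtain ⟨s, hs, hsR⟩ := intermediate_value_Icc (zero_le_one' ℝ) hc
      (show R ∈ Icc _ _ by simpa using ⟨hx, hy.le⟩)
    have hd : dist x (AffineMap.lineMap x y s) ≤ dist x y := by
      rw [dist_left_lineMap, Real.norm_of_nonneg hs.1]
      exact mul_le_of_le_one_left dist_nonneg hs.2
    calc dist (g x) 0 = dist (g x) (g (AffineMap.lineMap x y s)) := by rw [h0 _ hsR]
      _ ≤ K * dist x (AffineMap.lineMap x y s) :=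
          hg.dist_le_mul _ (by simpa using hx) _ (by simpa using hsR.le)
      _ ≤ K * dist x y := by gcongr
  refine LipschitzWith.of_dist_le_mul fun x y => ?_
  by_cases hx : ‖x‖ ≤ R <;> by_cases hy : ‖y‖ ≤ R <;>
    simp only [indicator, mem_closedBall_zero_iff, hx, hy, if_true, if_false]
  · exact hg.dist_le_mul _ (by simpa using hx) _ (by simpa using hy)
  · exact key x y hx (not_le.1 hy)
  · rw [dist_comm, dist_comm x]
    exact key y x hy (not_le.1 hx)
  · simp; positivity

/-- For small `t` the map `x ↦ x + t g x` permutes the closed ball. Injectivity is the Lipschitz bound;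
surjectivity is the contraction principle for `x ↦ y - t g x`, with `g` extended by zero: a solution
outside the ball would be `y` itself. -/
theorem perturb_bij [CompleteSpace E] {R : ℝ} {g : E → E} {K : NNReal}
    (hg : LipschitzOnWith K g (Metric.closedBall 0 R)) (h0 : ∀ x, ‖x‖ = R → g x = 0)
    (hr : ∀ x, ‖x‖ ≤ R → ‖x + g x‖ ≤ R) {t : ℝ} (ht0 : 0 ≤ t) (ht1 : t ≤ 1) (htK : t * K < 1) :
    BijOn (fun x => x + t • g x) (Metric.closedBall 0 R) (Metric.closedBall 0 R) := by
  refine ⟨fun x hx => ?_, fun x hx y hy hxy => ?_, fun y hy => ?_⟩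
  · rw [mem_closedBall_zero_iff] at *
    have : x + t • g x = (1 - t) • x + t • (x + g x) := by module
    simp only [this]
    calc _ ≤ ‖(1 - t) • x‖ + ‖t • (x + g x)‖ := norm_add_le _ _
      _ = (1 - t) * ‖x‖ + t * ‖x + g x‖ := by
          rw [norm_smul, norm_smul, Real.norm_of_nonneg ht0, Real.norm_of_nonneg (by linarith)]
      _ ≤ (1 - t) * R + t * R := by
          have := hr x hx
          gcongr
      _ = R := by ring
  · have h1 : x - y = t • (g y - g x) := by
      have : x + t • g x = y + t • g y := hxy
      rw [smul_sub, sub_eq_sub_iff_add_eq_add, this, add_comm]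
    have h2 : ‖g y - g x‖ ≤ K * ‖x - y‖ := by
      have := hg.dist_le_mul y hy x hx
      rwa [dist_eq_norm, dist_eq_norm, norm_sub_rev y x] at this
    have h3 : ‖x - y‖ ≤ t * K * ‖x - y‖ := by
      calc ‖x - y‖ = t * ‖g y - g x‖ := by
            conv_lhs => rw [h1, norm_smul, Real.norm_of_nonneg ht0]
        _ ≤ t * (K * ‖x - y‖) := by gcongr
        _ = _ := by ring
    have h4 : ‖x - y‖ = 0 := by
      have := norm_nonneg (x - y)
      nlinarith
    exact sub_eq_zero.1 (norm_eq_zero.1 h4)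
  · have hL := lipschitz_indicator hg h0
    lift t to NNReal using ht0
    have hcon : ContractingWith (t * K)
        (fun x => y - (t : ℝ) • (Metric.closedBall 0 R).indicator g x) := by
      refine ⟨by exact_mod_cast htK,
        LipschitzWith.of_dist_le_mul fun a b => ?_⟩
      rw [dist_sub_left, dist_smul₀, Real.norm_of_nonneg (NNReal.coe_nonneg t)]
      have := hL.dist_le_mul a b
      push_cast
      rw [mul_assoc]
      exact mul_le_mul_of_nonneg_left this t.2
    have hx := hcon.fixedPoint_isFixedPt
    set x := ContractingWith.fixedPoint _ hcon
    have hx' : y - (t : ℝ) • (Metric.closedBall 0 R).indicator g x = x := hx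
    by_cases hxR : x ∈ Metric.closedBall (0 : E) R
    · rw [indicator_of_mem hxR] at hx'
      exact ⟨x, hxR, by simp only; rw [← sub_eq_iff_eq_add.1 hx']⟩
    · rw [indicator_of_notMem hxR, smul_zero, sub_zero] at hx'
      exact absurd (hx' ▸ hy) hxR

end

/-- There is no `C¹` retraction `x ↦ x + g x` of the closed ball of radius `R` onto its sphere. The
integral over the ball of `det (1 + t Dg)` is the volume of the ball for small `t`, by the change of
variables formula, hence also for `t = 1` by polynomiality in `t`; but `1 + Dg` is singular
everywhere on the ball, because `‖x + g x‖` is constant there. -/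
theorem no_retraction_s1 {n : ℕ} {R : ℝ} (hR : 0 < R)
    {g : EuclideanSpace ℝ (Fin n) → EuclideanSpace ℝ (Fin n)} (hg : ContDiff ℝ 1 g)
    (h0 : ∀ x, ‖x‖ = R → g x = 0) (hr : ∀ x, ‖x‖ ≤ R → ‖x + g x‖ = R) : False := by
  set B := Metric.closedBall (0 : EuclideanSpace ℝ (Fin n)) R with hB
  have hBc : IsCompact B := isCompact_closedBall 0 R
  have hfd : Continuous (fderiv ℝ g) := hg.continuous_fderiv one_ne_zero
  have hdiff : Differentiable ℝ g := hg.differentiable one_ne_zero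
  obtain ⟨K, hK⟩ : ∃ K : NNReal, ∀ x ∈ B, ‖fderiv ℝ g x‖ ≤ K := by
    obtain ⟨C, hC⟩ := hBc.exists_bound_of_continuousOn hfd.continuousOn
    exact ⟨C.toNNReal, fun x hx => (hC x hx).trans (Real.le_coe_toNNReal C)⟩
  have hLip : LipschitzOnWith K g B :=
    (convex_closedBall 0 R).lipschitzOnWith_of_nnnorm_fderiv_le
      (fun x _ => hdiff x) (fun x hx => by exact_mod_cast hK x hx)
  have hdetc (t : ℝ) : Continuous fun x => (ContinuousLinearMap.id ℝ _ + t • fderiv ℝ g x).det :=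
    ContinuousLinearMap.continuous_det.comp (by fun_prop)
  -- determinants close to that of the identity are positive
  obtain ⟨δ, hδ, hdet⟩ : ∃ δ > 0, ∀ A : EuclideanSpace ℝ (Fin n) →L[ℝ] EuclideanSpace ℝ (Fin n),
      ‖A‖ < δ → 0 < (ContinuousLinearMap.id ℝ _ + A).det := by
    have hc : Continuous fun A : EuclideanSpace ℝ (Fin n) →L[ℝ] EuclideanSpace ℝ (Fin n) =>
        (ContinuousLinearMap.id ℝ _ + A).det :=
      ContinuousLinearMap.continuous_det.comp (by fun_prop)
    have h1 : (0:ℝ) < (ContinuousLinearMap.id ℝ (EuclideanSpace ℝ (Fin n)) + 0).det := by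
      rw [add_zero]
      have : (ContinuousLinearMap.id ℝ (EuclideanSpace ℝ (Fin n))).det = 1 := LinearMap.det_id
      rw [this]; exact one_pos
    have := hc.continuousAt.eventually (lt_mem_nhds h1)
    obtain ⟨δ, hδ, h⟩ := Metric.eventually_nhds_iff.1 this
    exact ⟨δ, hδ, fun A hA => h (by simpa using hA)⟩
  -- for `0 ≤ t ≤ τ` both `t K < 1` and `‖t Dg‖ < δ`
  set τ : ℝ := min 1 (min 1 δ / (K + 1)) / 2 with hτ
  have hτ0 : 0 < τ := by positivity
  have hvol (t : ℝ) (ht0 : 0 ≤ t) (ht : t ≤ τ) :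
      ∫ x in B, (ContinuousLinearMap.id ℝ _ + t • fderiv ℝ g x).det = volume.real B := by
    have ht1 : t ≤ 1 := by
      have : min 1 (min 1 δ / (K + 1)) ≤ 1 := min_le_left _ _
      linarith
    have htK1 : t * (K + 1) < min 1 δ := by
      have h1 : τ < min 1 δ / (K + 1) := by
        have : min 1 (min 1 δ / (K + 1)) ≤ min 1 δ / (K + 1) := min_le_right _ _
        have : 0 < min 1 δ / (K + 1 : ℝ) := by positivity
        linarith
      have h2 : (0:ℝ) < K + 1 := by positivity
      rw [← lt_div_iff₀ h2]
      linarith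
    have htK : t * K < min 1 δ := by nlinarith
    have hbij := perturb_bij hLip h0 (fun x hx => (hr x hx).le) ht0 ht1
      (htK.trans_le (min_le_left _ _))
    have hder (x) (_ : x ∈ B) : HasFDerivWithinAt (fun x => x + t • g x)
        (ContinuousLinearMap.id ℝ _ + t • fderiv ℝ g x) B x :=
      ((hasFDerivAt_id x).add ((hdiff x).hasFDerivAt.const_smul t)).hasFDerivWithinAt
    have hcv := integral_image_eq_integral_abs_det_fderiv_smul volume
      hBc.isClosed.measurableSet hder hbij.injOn (fun _ => (1:ℝ))
    rw [hbij.image_eq] at hcv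
    simp only [smul_eq_mul, mul_one, integral_const, measureReal_restrict_apply_univ] at hcv
    rw [hcv]
    refine setIntegral_congr_fun hBc.isClosed.measurableSet fun x hx => ?_
    refine (abs_of_pos (hdet _ ?_)).symm
    rw [norm_smul, Real.norm_of_nonneg ht0]
    exact (mul_le_mul_of_nonneg_left (hK x hx) ht0).trans_lt (htK.trans_le (min_le_right _ _))
  obtain ⟨w, hw⟩ := det_weights n (fun i : Fin (n + 1) => τ * (i / (n + 1) : ℝ)) (by
    intro i j hij
    have h2 : (n:ℝ) + 1 ≠ 0 := by positivity
    have : (i : ℝ) = j := by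
      have := mul_left_cancel₀ hτ0.ne' hij
      rwa [div_left_inj' h2] at this
    exact Fin.ext (by exact_mod_cast this))
  have hInt (t : ℝ) : IntegrableOn
      (fun x => (ContinuousLinearMap.id ℝ _ + t • fderiv ℝ g x).det) B :=
    (hdetc t).continuousOn.integrableOn_compact hBc
  -- the case `A = 0` of the interpolation identity
  have hwsum : ∑ i, w i = 1 := by
    have h := hw 0
    have h1 : (ContinuousLinearMap.id ℝ (EuclideanSpace ℝ (Fin n))).det = 1 := LinearMap.det_id
    have hz (c : ℝ) : c • (0 : EuclideanSpace ℝ (Fin n) →L[ℝ] EuclideanSpace ℝ (Fin n)) = 0 :=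
      ContinuousLinearMap.ext fun _ => smul_zero c
    simp only [hz, add_zero, h1, mul_one] at h
    exact h.symm
  have hone : ∫ x in B, (ContinuousLinearMap.id ℝ _ + fderiv ℝ g x).det = volume.real B := by
    rw [setIntegral_congr_fun hBc.isClosed.measurableSet fun x _ => hw _]
    rw [integral_finsetSum _ fun i _ => (hInt _).const_mul _]
    simp_rw [integral_const_mul]
    calc _ = ∑ i, w i * volume.real B := by
          refine Finset.sum_congr rfl fun i _ => ?_
          rw [hvol _ (by positivity)]
          have : (i : ℝ) ≤ n + 1 := by exact_mod_cast i.2.le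
          exact mul_le_of_le_one_right hτ0.le ((div_le_one (by positivity)).2 this)
      _ = _ := by rw [← Finset.sum_mul, hwsum, one_mul]
  -- `x + g x` has constant norm on the open ball, so its derivative is singular
  have hsing (x) (hx : x ∈ Metric.ball (0 : EuclideanSpace ℝ (Fin n)) R) :
      (ContinuousLinearMap.id ℝ _ + fderiv ℝ g x).det = 0 := by
    by_contra hne
    have hd : HasFDerivAt (fun x => x + g x) (ContinuousLinearMap.id ℝ _ + fderiv ℝ g x) x :=
      (hasFDerivAt_id x).add (hdiff x).hasFDerivAt
    have hsq := hd.norm_sq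
    have hconst : HasFDerivAt (fun x => ‖x + g x‖ ^ 2) (0 : EuclideanSpace ℝ (Fin n) →L[ℝ] ℝ) x := by
      refine (hasFDerivAt_const (R ^ 2) x).congr_of_eventuallyEq ?_
      filter_upwards [Metric.isOpen_ball.mem_nhds hx] with y hy
      rw [hr y (by simpa using (Metric.ball_subset_closedBall hy))]
    have hz := hsq.unique hconst
    obtain ⟨v, hv⟩ : ∃ v, (ContinuousLinearMap.id ℝ (EuclideanSpace ℝ (Fin n))
        + fderiv ℝ g x) v = x + g x :=
      ((Module.End.isUnit_iff _).1
        ((LinearMap.isUnit_iff_isUnit_det _).2 (isUnit_iff_ne_zero.2 hne))).2 _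
    have this : 2 • inner ℝ (x + g x) ((ContinuousLinearMap.id ℝ (EuclideanSpace ℝ (Fin n))
        + fderiv ℝ g x) v) = 0 := DFunLike.congr_fun hz v
    have hn := hr x (by simpa using (Metric.ball_subset_closedBall hx))
    rw [hv, real_inner_self_eq_norm_sq, hn, nsmul_eq_mul] at this
    have : 0 < ((2 : ℕ) : ℝ) * R ^ 2 := by positivity
    linarith
  have hsing' (x) (hx : x ∈ B) : (ContinuousLinearMap.id ℝ _ + fderiv ℝ g x).det = 0 := by
    have hcl : IsClosed {x | (ContinuousLinearMap.id ℝ _ + fderiv ℝ g x).det = 0} :=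
      isClosed_eq (by simpa using hdetc 1) continuous_const
    refine closure_minimal hsing hcl ?_
    rwa [closure_ball _ hR.ne']
  rw [setIntegral_congr_fun hBc.isClosed.measurableSet hsing', integral_zero] at hone
  have : 0 < volume.real B :=
    ENNReal.toReal_pos (Metric.measure_closedBall_pos volume 0 hR).ne' hBc.measure_lt_top.ne
  linarith

/-- Brouwer's fixed point theorem, for bounded continuous self-maps of the whole space. -/
theorem brouwer {n : ℕ} {G : EuclideanSpace ℝ (Fin n) → EuclideanSpace ℝ (Fin n)}
    (hG : Continuous G) {C : ℝ} (hC : ∀ x, ‖G x‖ ≤ C) : ∃ x, G x = x := by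
  have hC0 : 0 ≤ C := (norm_nonneg _).trans (hC 0)
  have happrox (ε : ℝ) (hε : 0 < ε) (hε1 : ε ≤ 1) : ∃ x, ‖x‖ ≤ C + 1 ∧ dist x (G x) < ε := by
    by_contra! hcon
    -- cutoff making the map compactly supported without creating fixed points
    let χ : EuclideanSpace ℝ (Fin n) → ℝ := fun x => max 0 (min 1 (C + 2 - ‖x‖))
    have hχ0 (x) : 0 ≤ χ x := le_max_left _ _
    have hχ1 (x) : χ x ≤ 1 := max_le zero_le_one (min_le_left _ _)
    obtain ⟨p, hp, hpG, hps⟩ := Continuous.exists_contDiff_approx (f := fun x => χ x • G x) 1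
      (by fun_prop) (continuous_const (y := ε)) (fun _ => hε)
    have hp0 (x) (hx : C + 2 ≤ ‖x‖) : p x = 0 := by
      by_contra hne
      refine hps hne ?_
      have : χ x = 0 := max_eq_left ((min_le_right _ _).trans (by linarith))
      simp [this]
    have hne (x) : x - p x ≠ 0 := by
      intro h
      have hx : x = p x := sub_eq_zero.1 h
      have hd : dist x (χ x • G x) < ε := by
        have := hpG x
        rwa [← hx] at this
      have hxC : ‖x‖ ≤ C + 1 := by
        have h1 : ‖χ x • G x‖ ≤ C := by
          rw [norm_smul, Real.norm_of_nonneg (hχ0 x)]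
          exact (mul_le_of_le_one_left (norm_nonneg _) (hχ1 x)).trans (hC x)
        have h2 : ‖x‖ ≤ ‖x - χ x • G x‖ + ‖χ x • G x‖ := by
          simpa using norm_add_le (x - χ x • G x) (χ x • G x)
        rw [dist_eq_norm] at hd
        linarith
      have hχx : χ x = 1 := by
        have : min 1 (C + 2 - ‖x‖) = 1 := min_eq_left (by linarith)
        simp [χ, this]
      rw [hχx, one_smul] at hd
      exact (hcon x hxC).not_gt hd
    have hR : 0 < C + 2 := by linarith
    -- `x - p x` has no zero and is the identity on the sphere, so normalizing it gives a retraction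
    refine no_retraction_s1 (R := C + 2) (g := fun x => ((C + 2) / ‖x - p x‖) • (x - p x) - x) hR
      ?_ ?_ ?_
    · have h1 : ContDiff ℝ 1 fun x => x - p x := contDiff_id.sub hp
      exact ((contDiff_const.div (h1.norm ℝ hne) fun x => norm_ne_zero_iff.2 (hne x)).smul h1).sub
        contDiff_id
    · intro x hx
      simp only [hp0 x hx.ge, sub_zero, hx]
      rw [div_self hR.ne', one_smul, sub_self]
    · intro x _
      have := norm_ne_zero_iff.2 (hne x)
      rw [add_sub_cancel, norm_smul, norm_div, norm_norm, div_mul_cancel₀ _ this,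
        Real.norm_of_nonneg hR.le]
  obtain ⟨x, -, hx⟩ := (isCompact_closedBall (0 : EuclideanSpace ℝ (Fin n)) (C + 1)).exists_isMinOn
    (f := fun x => dist x (G x)) ⟨0, by simpa using by linarith⟩ (by fun_prop)
  refine ⟨x, ?_⟩
  by_contra hne
  have hpos : 0 < dist x (G x) := dist_pos.2 (Ne.symm hne)
  obtain ⟨y, hy, hyd⟩ := happrox (min 1 (dist x (G x))) (by positivity) (min_le_left _ _)
  have := hx (show y ∈ Metric.closedBall 0 (C + 1) by simpa using hy)
  exact (lt_min_iff.1 hyd).2.not_ge this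

/-- Schauder's fixed point theorem, for continuous maps of the whole space into a compact set. -/
theorem schauder {E : Type*} [NormedAddCommGroup E] [NormedSpace ℝ E] {S : E → E}
    (hS : Continuous S) {K : Set E} (hK : IsCompact K) (hSK : ∀ x, S x ∈ K) : ∃ x, S x = x := by
  have happrox (ε : ℝ) (hε : 0 < ε) : ∃ x, dist (S x) x ≤ ε := by
    obtain ⟨T, hTK, hTfin, hcov⟩ := hK.finite_cover_balls hε
    obtain ⟨n, y, -, rfl⟩ := hTfin.fin_param
    -- normalized, these weights replace `v ∈ K` by an average of points of the net at distance `< ε`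
    let φ : Fin n → E → ℝ := fun i v => max 0 (ε - dist v (y i))
    have hφ0 (i v) : 0 ≤ φ i v := le_max_left _ _
    have hφs (v) (hv : v ∈ K) : 0 < ∑ i, φ i v := by
      obtain ⟨_, ⟨i, rfl⟩, hi⟩ := mem_iUnion₂.1 (hcov hv)
      refine Finset.sum_pos' (fun i _ => hφ0 i v) ⟨i, Finset.mem_univ i, ?_⟩
      exact lt_max_of_lt_right (sub_pos.2 hi)
    let p : EuclideanSpace ℝ (Fin n) → E := fun x => ∑ i, x i • y i
    have hp : Continuous p := by fun_prop
    let W : EuclideanSpace ℝ (Fin n) → Fin n → ℝ :=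
      fun x i => φ i (S (p x)) / ∑ j, φ j (S (p x))
    have hpos (x) : 0 < ∑ j, φ j (S (p x)) := hφs _ (hSK _)
    have hW : Continuous W := by
      refine continuous_pi fun i => Continuous.div (by fun_prop) (by fun_prop) fun x => (hpos x).ne'
    have hW0 (x i) : 0 ≤ W x i := div_nonneg (hφ0 _ _) (hpos x).le
    have hW1 (x) : ∑ i, W x i = 1 := by
      rw [← Finset.sum_div, div_self (hpos x).ne']
    obtain ⟨x, hx⟩ := brouwer (G := fun x => WithLp.toLp 2 (W x))
      ((PiLp.continuous_toLp 2 _).comp hW) (C := 1) (fun x => by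
        rw [EuclideanSpace.norm_eq]
        refine Real.sqrt_le_one.2 ?_
        calc ∑ i, ‖W x i‖ ^ 2 ≤ ∑ i, W x i := Finset.sum_le_sum fun i _ => by
              have : W x i ≤ 1 := by
                rw [← hW1 x]
                exact Finset.single_le_sum (fun j _ => hW0 x j) (Finset.mem_univ i)
              rw [Real.norm_of_nonneg (hW0 x i)]
              nlinarith [hW0 x i]
          _ = 1 := hW1 x)
    have hxi (i) : x i = W x i := by conv_lhs => rw [← hx]
    refine ⟨p x, ?_⟩
    have h1 : S (p x) - p x = ∑ i, W x i • (S (p x) - y i) := by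
      simp_rw [smul_sub, Finset.sum_sub_distrib, ← Finset.sum_smul, hW1, one_smul]
      congr 1
      exact Finset.sum_congr rfl fun i _ => by rw [hxi]
    rw [dist_eq_norm, h1]
    calc _ ≤ ∑ i, ‖W x i • (S (p x) - y i)‖ := norm_sum_le _ _
      _ ≤ ∑ i, W x i * ε := Finset.sum_le_sum fun i _ => by
          rw [norm_smul, Real.norm_of_nonneg (hW0 x i), ← dist_eq_norm]
          by_cases hd : dist (S (p x)) (y i) ≤ ε
          · exact mul_le_mul_of_nonneg_left hd (hW0 x i)
          · have : W x i = 0 := by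
              have : φ i (S (p x)) = 0 := max_eq_left (by linarith)
              simp [W, this]
            simp [this]
      _ = ε := by rw [← Finset.sum_mul, hW1, one_mul]
  choose x hx using fun m : ℕ => happrox (1 / (m + 1)) (by positivity)
  obtain ⟨v, -, σ, hσ, hv⟩ := hK.tendsto_subseq fun m => hSK (x m)
  have hd : Filter.Tendsto (fun m => dist (S (x (σ m))) (x (σ m))) Filter.atTop (nhds 0) :=
    (squeeze_zero (fun _ => dist_nonneg) hx tendsto_one_div_add_atTop_nhds_zero_nat).comp
      hσ.tendsto_atTop
  have hxv : Filter.Tendsto (fun m => x (σ m)) Filter.atTop (nhds v) :=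
    (tendsto_iff_of_dist hd).1 hv
  exact ⟨v, tendsto_nhds_unique ((hS.tendsto v).comp hxv) hv⟩

/-- Arzelà–Ascoli for a uniformly bounded set of functions sharing the continuity modulus `ω`. -/
theorem arzela {X : Type*} [TopologicalSpace X] [CompactSpace X] (A : Set C(X, ℝ)) (C : ℝ)
    (hA : ∀ w ∈ A, ∀ t, |w t| ≤ C)
    (ω : X → X → ℝ) (hω : ∀ t, Continuous (ω t)) (hω0 : ∀ t, ω t t = 0)
    (hAω : ∀ w ∈ A, ∀ t t', |w t - w t'| ≤ ω t t') : IsCompact (closure A) := by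
  let e := (ContinuousMap.isometryEquivBoundedOfCompact X ℝ).toHomeomorph
  have : IsCompact (closure (e '' A)) := by
    refine BoundedContinuousFunction.arzela_ascoli (Metric.closedBall 0 C)
      (isCompact_closedBall _ _) _ ?_ ?_
    · rintro _ t ⟨w, hw, rfl⟩
      rw [mem_closedBall_zero_iff]
      exact hA w hw t
    · intro t
      refine Metric.equicontinuousAt_of_continuity_modulus (ω t)
        (by simpa [hω0] using (hω t).tendsto t) _ (Filter.Eventually.of_forall ?_)
      rintro t' ⟨_, w, hw, rfl⟩
      exact hAω w hw t t'
  rwa [← e.image_closure, e.isCompact_image] at this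

/-- A compact map that stays away from zero has eigenvectors of any prescribed norm, with eigenvalues
of either sign: `u ↦ σ ρ T u / ‖T u‖` is again compact, and its fixed points have norm `ρ`. -/
theorem exists_eigenvector {E : Type*} [NormedAddCommGroup E] [NormedSpace ℝ E] {T : E → E}
    (hT : Continuous T) (hK : IsCompact (closure (range T))) {δ ρ : ℝ} (hδ : 0 < δ) (hρ : 0 < ρ)
    (hTδ : ∀ u, δ ≤ ‖T u‖) {σ : ℝ} (hσ : |σ| = 1) :
    ∃ c : ℝ, 0 < c ∧ ∃ u, ‖u‖ = ρ ∧ u = (σ * c) • T u := by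
  have hpos (u) : 0 < ‖T u‖ := hδ.trans_le (hTδ u)
  let N : E → E := fun w => (σ * (ρ / ‖w‖)) • w
  have hN : ContinuousOn N {w | δ ≤ ‖w‖} := by
    refine ContinuousOn.smul (continuousOn_const.mul
      (continuousOn_const.div continuous_norm.continuousOn fun w hw => ?_)) continuousOn_id
    exact (hδ.trans_le hw).ne'
  have hTmem (u) : T u ∈ closure (range T) ∩ {w | δ ≤ ‖w‖} :=
    ⟨subset_closure ⟨u, rfl⟩, hTδ u⟩
  have hKδ : IsCompact (closure (range T) ∩ {w | δ ≤ ‖w‖}) :=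
    hK.inter_right (isClosed_le continuous_const continuous_norm)
  obtain ⟨u, hu⟩ := schauder (S := fun u => N (T u))
    (hN.comp_continuous hT hTδ) (hKδ.image_of_continuousOn (hN.mono inter_subset_right))
    fun u => mem_image_of_mem N (hTmem u)
  refine ⟨ρ / ‖T u‖, div_pos hρ (hpos u), u, ?_, hu.symm⟩
  have : ‖N (T u)‖ = ρ := by
    rw [norm_smul, norm_mul, Real.norm_eq_abs σ, hσ, one_mul, norm_div, norm_norm,
      div_mul_cancel₀ _ (hpos u).ne', Real.norm_of_nonneg hρ.le]
  rwa [← hu]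

/-- Under assumptions (1)–(4) and (5b) ( for some ),
the Hammerstein integral equation has a positive and a negative eigenvalue with
eigenfunctions of sup-norm . -/
theorem hammerstein_eigenvalues_5b
    (ρ : ℝ) (hρ : 0 < ρ)
    (k : ℝ → ℝ → ℝ)
    (hk_cont : ContinuousOn (fun p : ℝ × ℝ => k p.1 p.2)
      (Set.Icc 0 1 ×ˢ Set.Icc 0 1))
    (hk_nonneg : ∀ t ∈ Set.Icc (0:ℝ) 1, ∀ s ∈ Set.Icc (0:ℝ) 1, 0 ≤ k t s)
    (H : C(Set.Icc (0:ℝ) 1, ℝ) → ℝ)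
    (hH_cont : ContinuousOn H (Metric.closedBall 0 ρ))
    (Hlo Hup : ℝ)
    (hH_bd : ∀ u ∈ Metric.closedBall (0 : C(Set.Icc (0:ℝ) 1, ℝ)) ρ,
      Hlo ≤ H u ∧ H u ≤ Hup)
    (f : ℝ → ℝ → ℝ → ℝ)
    (hf_cont : ContinuousOn (fun p : ℝ × ℝ × ℝ => f p.1 p.2.1 p.2.2)
      (Set.Icc 0 1 ×ˢ Set.Icc (-ρ) ρ ×ˢ Set.Icc Hlo Hup))
    (flo fup : ℝ → ℝ)
    (hflo_cont : ContinuousOn flo (Set.Icc 0 1))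
    (hfup_cont : ContinuousOn fup (Set.Icc 0 1))
    (hf_bd : ∀ t ∈ Set.Icc (0:ℝ) 1, ∀ u ∈ Set.Icc (-ρ) ρ, ∀ v ∈ Set.Icc Hlo Hup,
      flo t ≤ f t u v ∧ f t u v ≤ fup t)
    (tρ : ℝ) (htρ : tρ ∈ Set.Icc (0:ℝ) 1)
    (h5b : 0 < ∫ s in (0:ℝ)..1, k tρ s * flo s) :
    ∃ lamp lamn : ℝ, 0 < lamp ∧ lamn < 0 ∧
      ∃ up un : C(Set.Icc (0:ℝ) 1, ℝ), ‖up‖ = ρ ∧ ‖un‖ = ρ ∧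
        (∀ t : Set.Icc (0:ℝ) 1, up t =
          lamp * ∫ s in (0:ℝ)..1, k t s * f s (up (Set.projIcc 0 1 zero_le_one s)) (H up)) ∧
        (∀ t : Set.Icc (0:ℝ) 1, un t =
          lamn * ∫ s in (0:ℝ)..1, k t s * f s (un (Set.projIcc 0 1 zero_le_one s)) (H un)) := by
  let q : ℝ → Icc (0:ℝ) 1 := projIcc 0 1 zero_le_one
  have hq : Continuous q := continuous_projIcc
  have hqs {s : ℝ} (hs : s ∈ uIcc (0:ℝ) 1) : (q s : ℝ) = s := by
    rw [uIcc_of_le zero_le_one] at hs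
    exact congrArg Subtype.val (projIcc_of_mem zero_le_one hs)
  -- radial retraction onto the ball, the identity on the ball itself
  let P : C(Icc (0:ℝ) 1, ℝ) → C(Icc (0:ℝ) 1, ℝ) := fun u => (ρ / max ρ ‖u‖) • u
  have hmax (u : C(Icc (0:ℝ) 1, ℝ)) : 0 < max ρ ‖u‖ := lt_max_of_lt_left hρ
  have hP : Continuous P := (continuous_const.div (continuous_const.max continuous_norm)
    fun u => (hmax u).ne').smul continuous_id
  have hPnorm (u) : ‖P u‖ ≤ ρ := by
    rw [norm_smul, norm_div, Real.norm_of_nonneg hρ.le, Real.norm_of_nonneg (hmax u).le,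
      div_mul_eq_mul_div, div_le_iff₀ (hmax u)]
    gcongr
    exact le_max_right _ _
  have hPid (u) (hu : ‖u‖ = ρ) : P u = u := by
    simp only [P, hu, max_self, div_self hρ.ne', one_smul]
  have hPball (u) : P u ∈ Metric.closedBall (0 : C(Icc (0:ℝ) 1, ℝ)) ρ := by
    simpa using hPnorm u
  have hPval (u) (x) : P u x ∈ Icc (-ρ) ρ :=
    abs_le.1 (((P u).norm_coe_le_norm x).trans (hPnorm u))
  have hHP : Continuous fun u => H (P u) := hH_cont.comp_continuous hP hPball
  let F : C(Icc (0:ℝ) 1, ℝ) → ℝ → ℝ := fun u s => f (q s) (P u (q s)) (H (P u))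
  have hF : Continuous fun p : C(Icc (0:ℝ) 1, ℝ) × ℝ => F p.1 p.2 := by
    have hev : Continuous fun p : C(Icc (0:ℝ) 1, ℝ) × ℝ => P p.1 (q p.2) := by fun_prop
    exact hf_cont.comp_continuous (f := fun p : C(Icc (0:ℝ) 1, ℝ) × ℝ =>
        ((q p.2 : ℝ), P p.1 (q p.2), H (P p.1)))
      ((continuous_subtype_val.comp (hq.comp continuous_snd)).prodMk
        (hev.prodMk (hHP.comp continuous_fst))) fun p => ⟨(q p.2).2, hPval _ _, hH_bd _ (hPball _)⟩
  have hFbd (u s) : flo (q s) ≤ F u s ∧ F u s ≤ fup (q s) :=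
    hf_bd _ (q s).2 _ (hPval _ _) _ (hH_bd _ (hPball _))
  obtain ⟨C, hC⟩ : ∃ C, ∀ u s, |F u s| ≤ C := by
    obtain ⟨C₁, h₁⟩ := isCompact_Icc.exists_bound_of_continuousOn hflo_cont
    obtain ⟨C₂, h₂⟩ := isCompact_Icc.exists_bound_of_continuousOn hfup_cont
    refine ⟨max C₁ C₂, fun u s => ?_⟩
    have a := abs_le.1 (h₁ _ (q s).2)
    have b := abs_le.1 (h₂ _ (q s).2)
    have c := hFbd u s
    exact abs_le.2 ⟨by linarith [le_max_left C₁ C₂], by linarith [le_max_right C₁ C₂]⟩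
  let k' : Icc (0:ℝ) 1 → ℝ → ℝ := fun t s => k t (q s)
  have hk' : Continuous fun p : Icc (0:ℝ) 1 × ℝ => k' p.1 p.2 :=
    hk_cont.comp_continuous (f := fun p : Icc (0:ℝ) 1 × ℝ => ((p.1 : ℝ), (q p.2 : ℝ)))
      (by fun_prop) fun p => ⟨p.1.2, (q p.2).2⟩
  have hcont : Continuous fun p : C(Icc (0:ℝ) 1, ℝ) × Icc (0:ℝ) 1 =>
      ∫ s in (0:ℝ)..1, k' p.2 s * F p.1 s := by
    refine intervalIntegral.continuous_parametric_intervalIntegral_of_continuous' ?_ 0 1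
    exact (hk'.comp (by fun_prop : Continuous fun z : (C(Icc (0:ℝ) 1, ℝ) × Icc (0:ℝ) 1) × ℝ =>
      (z.1.2, z.2))).mul (hF.comp (by fun_prop : Continuous
        fun z : (C(Icc (0:ℝ) 1, ℝ) × Icc (0:ℝ) 1) × ℝ => (z.1.1, z.2)))
  let T : C(C(Icc (0:ℝ) 1, ℝ), C(Icc (0:ℝ) 1, ℝ)) := ContinuousMap.curry ⟨_, hcont⟩
  have hTapp (u t) : T u t = ∫ s in (0:ℝ)..1, k' t s * F u s := rfl
  have hkt (t) : Continuous (k' t) := hk'.comp (by fun_prop : Continuous fun s : ℝ => (t, s))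
  have hFu (u) : Continuous (F u) := hF.comp (by fun_prop : Continuous fun s : ℝ => (u, s))
  let ω : Icc (0:ℝ) 1 → Icc (0:ℝ) 1 → ℝ := fun t t' => ∫ s in (0:ℝ)..1, |k' t s - k' t' s| * C
  have hTω (u t t') : |T u t - T u t'| ≤ ω t t' := by
    have hi (t) : IntervalIntegrable (fun s => k' t s * F u s) volume 0 1 :=
      ((hkt t).mul (hFu u)).intervalIntegrable _ _
    rw [hTapp, hTapp, ← intervalIntegral.integral_sub (hi t) (hi t')]
    refine (intervalIntegral.abs_integral_le_integral_abs zero_le_one).trans ?_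
    refine intervalIntegral.integral_mono_on zero_le_one
      (Continuous.intervalIntegrable (by fun_prop) _ _)
      (Continuous.intervalIntegrable (by fun_prop) _ _) fun s _ => ?_
    rw [← sub_mul, abs_mul]
    exact mul_le_mul_of_nonneg_left (hC u s) (abs_nonneg _)
  have hωc (t) : Continuous (ω t) := by
    refine intervalIntegral.continuous_parametric_intervalIntegral_of_continuous' ?_ 0 1
    have : Continuous fun z : Icc (0:ℝ) 1 × ℝ => k' t z.2 := (hkt t).comp continuous_snd
    exact ((this.sub hk').abs.mul continuous_const)
  obtain ⟨D, hD⟩ := (isCompact_univ.prod isCompact_Icc).exists_bound_of_continuousOn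
    (s := univ ×ˢ Icc (0:ℝ) 1) hk'.continuousOn
  have hTbd (u t) : |T u t| ≤ D * C := by
    have := intervalIntegral.norm_integral_le_of_norm_le_const (a := (0:ℝ)) (b := 1)
      (f := fun s => k' t s * F u s) (C := D * C) fun s hs => ?_
    · simpa [hTapp] using this
    · rw [uIoc_of_le zero_le_one] at hs
      have h := hD (t, s) ⟨mem_univ _, Ioc_subset_Icc_self hs⟩
      rw [norm_mul]
      exact mul_le_mul h (hC u s) (norm_nonneg _) ((norm_nonneg _).trans h)
  have hcomp : IsCompact (closure (range T)) := by
    refine arzela _ (D * C) ?_ ω hωc (fun t => by simp [ω]) ?_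
    · rintro _ ⟨u, rfl⟩ t
      exact hTbd u t
    · rintro _ ⟨u, rfl⟩ t t'
      exact hTω u t t'
  have hTδ (u) : ∫ s in (0:ℝ)..1, k tρ s * flo s ≤ ‖T u‖ := by
    have hflo : Continuous fun s => flo (q s) :=
      hflo_cont.comp_continuous (by fun_prop) fun s => (q s).2
    calc ∫ s in (0:ℝ)..1, k tρ s * flo s
        = ∫ s in (0:ℝ)..1, k' ⟨tρ, htρ⟩ s * flo (q s) :=
          intervalIntegral.integral_congr fun s hs => by simp only [k', hqs hs]
      _ ≤ ∫ s in (0:ℝ)..1, k' ⟨tρ, htρ⟩ s * F u s := by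
          refine intervalIntegral.integral_mono_on zero_le_one
            (((hkt _).mul hflo).intervalIntegrable _ _)
            (((hkt _).mul (hFu u)).intervalIntegrable _ _) fun s _ => ?_
          exact mul_le_mul_of_nonneg_left (hFbd u s).1 (hk_nonneg _ htρ _ (q s).2)
      _ = T u ⟨tρ, htρ⟩ := rfl
      _ ≤ ‖T u‖ := (le_abs_self _).trans ((T u).norm_coe_le_norm _)
  -- on the sphere, `T` is the original integral operator
  have hTint (u) (hu : ‖u‖ = ρ) (t : Icc (0:ℝ) 1) :
      T u t = ∫ s in (0:ℝ)..1, k t s * f s (u (projIcc 0 1 zero_le_one s)) (H u) := by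
    rw [hTapp]
    exact intervalIntegral.integral_congr fun s hs => by simp only [k', F, hPid u hu, hqs hs]; rfl
  obtain ⟨c, hc, up, hup, hupe⟩ :=
    exists_eigenvector T.continuous hcomp h5b hρ hTδ (σ := 1) (by simp)
  obtain ⟨d, hd, un, hun, hune⟩ :=
    exists_eigenvector T.continuous hcomp h5b hρ hTδ (σ := -1) (by simp)
  refine ⟨c, -d, hc, by linarith, up, un, hup, hun, fun t => ?_, fun t => ?_⟩
  · have := DFunLike.congr_fun hupe t
    rwa [ContinuousMap.smul_apply, smul_eq_mul, hTint up hup, one_mul] at this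
  · have := DFunLike.congr_fun hune t
    rwa [ContinuousMap.smul_apply, smul_eq_mul, hTint un hun, neg_one_mul] at this
end

section
/- Let k be the Dirichlet Green's function k(t,s) = t(1−s) for t ≤ s and k(t,s) = s(1−t) for s ≤ t. For every ρ with 0 < ρ < (1/4)·ln(4π/(π−2)), there exist λ_ρ⁺ > 0, λ_ρ⁻ < 0 and continuous functions u⁺, u⁻ : [0,1] → ℝ with ‖u⁺‖_∞ = ‖u⁻‖_∞ = ρ such that u^{±}(t) = λ_ρ^{±} ∫₀¹ k(t,s) · sin((3π/2)s) · e^{u^{±}(s)} / (∫₀¹ e^{u^{±}(x)} dx) ds for all t ∈ [0,1]. -/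
/-!
Since `e^u / ∫ e^u` differs from `e^u` by a positive factor depending on `u` only, it suffices to
solve `-u'' = μ sin(3πt/2) e^u`, `u(0) = u(1) = 0`, with `‖u‖ = ρ` and `μ` of prescribed sign;
then `λ = μ ∫ e^u`. This is done by a two-parameter shooting argument.

Replace `e^x` by the bounded Lipschitz function `g = truncExp ρ`, equal to `e^x` for `|x| ≤ ρ`.
For every slope `a` and every `μ`, the initial value problem `-u'' = μ sin(3πt/2) g(u)`, `u(0) = 0`,
`u'(0) = a` has a solution depending continuously on `(a, μ)` (`exists_volterra`). The two scalar
equations to be solved are `u(1) = 0` and `‖v‖ = ρ`, where `v(t) = u(t) - t u(1)`.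

* For `a` large positive (negative), `u(1)` is positive (negative), because `g` is bounded.
* `v(t) = μ ∫ k(t,s) sin(3πs/2) g(u(s)) ds` vanishes for `μ = 0`, and `‖v‖ ≥ |v(1/3)| > ρ` when
  `|μ|` is large. Indeed `g` takes values in `[e^{-ρ}, e^ρ]`, so the integral at `t = 1/3` has the
  positive lower bound of `le_integral_green`; positivity is where `4ρ < ln(4π/(π-2))` enters.

The Poincaré–Miranda theorem in the plane (`exists_common_zero`) gives a common solution, for which
`v = u`, so `‖u‖ = ρ` and the truncation is inactive.
-/

open MeasureTheory Set Real

/-! ### The Poincaré–Miranda theorem in the plane -/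

lemma lt_of_lt_of_ne_path {φ : ℝ → ℝ} (hφ : Continuous φ) {c : ℝ} (hc : ∀ t, φ t ≠ c) {a : ℝ}
    (ha : φ a < c) (b : ℝ) : φ b < c := by
  by_contra hb
  obtain ⟨t, ht⟩ := mem_range_of_exists_le_of_exists_ge hφ ⟨a, ha.le⟩ ⟨b, not_lt.mp hb⟩
  exact hc t ht

lemma lt_of_lt_of_ne_path' {φ : ℝ → ℝ} (hφ : Continuous φ) {c : ℝ} (hc : ∀ t, φ t ≠ c) {a : ℝ}
    (ha : c < φ a) (b : ℝ) : c < φ b := by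
  by_contra hb
  obtain ⟨t, ht⟩ := mem_range_of_exists_le_of_exists_ge hφ ⟨b, not_lt.mp hb⟩ ⟨a, ha.le⟩
  exact hc t ht

/-- The planar Poincaré–Miranda theorem. If `F + iG` had no zero, it would lift through the complex
exponential; following the imaginary part `θ` of the lift once around the unit square, the signs
of `F` and `G` on the sides force `θ` to gain `2π`, which is absurd. The sign conditions are imposed
on whole lines, so that the lift can be taken over the simply connected plane. -/
theorem exists_common_zero {F G : ℝ × ℝ → ℝ} (hF : Continuous F) (hG : Continuous G)
    (hF0 : ∀ y, F (0, y) < 0) (hF1 : ∀ y, 0 < F (1, y))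
    (hG0 : ∀ x, G (x, 0) < 0) (hG1 : ∀ x, 0 < G (x, 1)) :
    ∃ p, F p = 0 ∧ G p = 0 := by
  by_contra! hne
  have hH : ∀ p, (⟨F p, G p⟩ : ℂ) ≠ 0 := fun p h ↦
    hne p (congrArg Complex.re h) (congrArg Complex.im h)
  let H : C(ℝ × ℝ, {z : ℂ // z ≠ 0}) :=
    ⟨fun p ↦ ⟨⟨F p, G p⟩, hH p⟩, by
      refine Continuous.subtype_mk ?_ _
      have : (fun p ↦ (⟨F p, G p⟩ : ℂ)) = fun p ↦ (F p : ℂ) + G p * Complex.I := by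
        ext p; exact Complex.mk_eq_add_mul_I _ _
      rw [this]; fun_prop⟩
  obtain ⟨L, ⟨hL0, hL⟩, -⟩ := Complex.isCoveringMap_exp.existsUnique_continuousMap_lifts H (0, 0)
    (Complex.log (H (0, 0)).1) (Subtype.ext (Complex.exp_log (H (0, 0)).2))
  have hexp : ∀ p, Complex.exp (L p) = ⟨F p, G p⟩ := fun p ↦ congrArg Subtype.val (congrFun hL p)
  let θ : ℝ × ℝ → ℝ := fun p ↦ (L p).im
  have hθ : Continuous θ := Complex.continuous_im.comp L.continuous
  have hFθ : ∀ p, F p = rexp (L p).re * cos (θ p) := fun p ↦ by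
    rw [← Complex.exp_re, hexp]
  have hGθ : ∀ p, G p = rexp (L p).re * sin (θ p) := fun p ↦ by
    rw [← Complex.exp_im, hexp]
  have cos_pos' : ∀ p, 0 < F p → 0 < cos (θ p) := fun p h ↦ by
    rw [hFθ] at h; exact pos_of_mul_pos_right h (exp_pos _).le
  have cos_neg' : ∀ p, F p < 0 → cos (θ p) < 0 := fun p h ↦ by
    rw [hFθ] at h; exact neg_of_mul_neg_right h (exp_pos _).le
  have sin_pos' : ∀ p, 0 < G p → 0 < sin (θ p) := fun p h ↦ by
    rw [hGθ] at h; exact pos_of_mul_pos_right h (exp_pos _).le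
  have sin_neg' : ∀ p, G p < 0 → sin (θ p) < 0 := fun p h ↦ by
    rw [hGθ] at h; exact neg_of_mul_neg_right h (exp_pos _).le
  have hpi := pi_pos
  -- In the lower left corner `F, G < 0`, and the lift is normalised so that `θ = arg (F + iG)`.
  have h00 : θ (0, 0) = Complex.arg ⟨F (0, 0), G (0, 0)⟩ := by
    change (L (0, 0)).im = _
    rw [hL0, Complex.log_im]
    rfl
  have h00n : θ (0, 0) < 0 := by
    rw [h00, Complex.arg_neg_iff]; exact hG0 0
  have h00l : -π < θ (0, 0) := by rw [h00]; exact Complex.neg_pi_lt_arg _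
  -- On `y = 0`, `sin θ < 0`, so `θ` cannot leave the interval `(-π, 0)`.
  have hbot : ∀ x, -π < θ (x, 0) ∧ θ (x, 0) < 0 := fun x ↦ by
    have hc : Continuous fun x : ℝ ↦ θ (x, 0) := by fun_prop
    constructor
    · refine lt_of_lt_of_ne_path' hc (fun t ht ↦ ?_) h00l x
      have := sin_neg' _ (hG0 t)
      rw [ht] at this; simp at this
    · refine lt_of_lt_of_ne_path hc (fun t ht ↦ ?_) h00n x
      have := sin_neg' _ (hG0 t)
      rw [ht] at this; simp at this
  -- On `x = 1`, `cos θ > 0`, so `θ` cannot leave the interval `(-π/2, π/2)`.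
  have hright : ∀ y, -(π / 2) < θ (1, y) ∧ θ (1, y) < π / 2 := fun y ↦ by
    have hc : Continuous fun y : ℝ ↦ θ (1, y) := by fun_prop
    constructor
    · refine lt_of_lt_of_ne_path' hc (a := 0) (fun t ht ↦ ?_) ?_ y
      · have := cos_pos' _ (hF1 t)
        rw [ht] at this; simp at this
      · by_contra! h
        have h1 := cos_pos' _ (hF1 0)
        rw [← cos_neg] at h1
        exact absurd h1 (not_lt.mpr (cos_nonpos_of_pi_div_two_le_of_le (by linarith)
          (by linarith [(hbot 1).1])))
    · refine lt_of_lt_of_ne_path hc (a := 0) (fun t ht ↦ ?_) (by linarith [(hbot 1).2]) y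
      have := cos_pos' _ (hF1 t)
      rw [ht] at this; simp at this
  -- On `y = 1`, `sin θ > 0`, so `θ` cannot leave the interval `(0, π)`.
  have htop : ∀ x, 0 < θ (x, 1) ∧ θ (x, 1) < π := fun x ↦ by
    have hc : Continuous fun x : ℝ ↦ θ (x, 1) := by fun_prop
    constructor
    · refine lt_of_lt_of_ne_path' hc (a := 1) (fun t ht ↦ ?_) ?_ x
      · have := sin_pos' _ (hG1 t)
        rw [ht] at this; simp at this
      · by_contra! h
        exact absurd (sin_pos' _ (hG1 1)) (not_lt.mpr
          (sin_nonpos_of_nonpos_of_neg_pi_le h (by linarith [(hright 1).1])))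
    · refine lt_of_lt_of_ne_path hc (a := 1) (fun t ht ↦ ?_) (by linarith [(hright 1).2]) x
      have := sin_pos' _ (hG1 t)
      rw [ht] at this; simp at this
  -- On `x = 0`, `cos θ < 0`, so `θ` stays above `π / 2`, back down to the lower left corner.
  have hleft : π / 2 < θ (0, 0) := by
    have hc : Continuous fun y : ℝ ↦ θ (0, y) := by fun_prop
    refine lt_of_lt_of_ne_path' hc (a := 1) (fun t ht ↦ ?_) ?_ 0
    · have := cos_neg' _ (hF0 t)
      rw [ht] at this; simp at this
    · by_contra! h
      exact absurd (cos_neg' _ (hF0 1)) (not_lt.mpr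
          (cos_nonneg_of_neg_pi_div_two_le_of_le (by linarith [(htop 0).1]) h))
  linarith

/-! ### The initial value problem -/

lemma abs_integral_le_of_abs_le {h : ℝ → ℝ} {C : ℝ} (hC : ∀ s ∈ Ioc (0:ℝ) 1, |h s| ≤ C) :
    |∫ s in (0:ℝ)..1, h s| ≤ C := by
  have := intervalIntegral.norm_integral_le_of_norm_le_const (a := (0:ℝ)) (b := 1) (f := h) (C := C)
    (by rwa [uIoc_of_le zero_le_one])
  simpa using this

/-- Solutions of `-u'' = μ f g(u)`, `u(0) = 0`, `u'(0) = α`, written as a Volterra equation, exist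
and depend continuously on the parameters `α` and `μ`. In terms of `y(t) = e^{-Kt} u(t)` the
equation is a fixed-point problem for a `1/2`-contraction in the sup norm once `K` is large. -/
theorem exists_volterra {f g : ℝ → ℝ} (hf : Continuous f) (hg : Continuous g) {B L M : ℝ}
    (hf1 : ∀ s, |f s| ≤ 1) (hgB : ∀ x, |g x| ≤ B) (hL : 0 ≤ L)
    (hgL : ∀ x y, |g x - g y| ≤ L * |x - y|) {P : Type*} [TopologicalSpace P]
    {α μ : P → ℝ} (hα : Continuous α) (hμ : Continuous μ) (hμM : ∀ p, |μ p| ≤ M) (hM : 0 ≤ M) :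
    ∃ U : P → C(Icc (0:ℝ) 1, ℝ), Continuous U ∧ ∀ p t, U p t = α p * t -
      μ p * ∫ s in (0:ℝ)..1, max (t - s) 0 * (f s * g (U p (projIcc 0 1 zero_le_one s))) := by
  set K : ℝ := 2 * (M * L) + 1 with hK
  have hML : 0 ≤ M * L := mul_nonneg hM hL
  have hKpos : 0 < K := by positivity
  have hproj : Continuous (projIcc (0:ℝ) 1 zero_le_one) := continuous_projIcc
  let J : C(Icc (0:ℝ) 1, ℝ) → ℝ → ℝ := fun y t ↦ ∫ s in (0:ℝ)..1,
    max (t - s) 0 * (f s * g (rexp (K * s) * y (projIcc 0 1 zero_le_one s)))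
  have hJi : ∀ (y : C(Icc (0:ℝ) 1, ℝ)) (t : ℝ), Continuous fun s : ℝ ↦
    max (t - s) 0 * (f s * g (rexp (K * s) * y (projIcc 0 1 zero_le_one s))) := by
    intro y t; fun_prop
  have hJ : ∀ y, Continuous (J y) := fun y ↦ by
    refine intervalIntegral.continuous_parametric_intervalIntegral_of_continuous' ?_ 0 1
    simp only [Function.uncurry_def]
    fun_prop
  have hJB : ∀ (y) (t : Icc (0:ℝ) 1), |J y t| ≤ B := fun y t ↦ by
    refine abs_integral_le_of_abs_le fun s hs ↦ ?_
    have h1 : |max ((t:ℝ) - s) 0| ≤ 1 := by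
      rw [abs_of_nonneg (le_max_right _ _)]
      exact max_le (by linarith [t.2.2, hs.1]) zero_le_one
    have hB : 0 ≤ B := (abs_nonneg _).trans (hgB 0)
    rw [abs_mul, abs_mul]
    calc _ ≤ 1 * (1 * B) := by
          gcongr
          · exact hf1 s
          · exact hgB _
      _ = B := by ring
  have hJL : ∀ (y z) (t : Icc (0:ℝ) 1), |J y t - J z t| ≤ rexp (K * t) * (L / K * dist y z) := by
    intro y z t
    have hsub : J y t - J z t = ∫ s in (0:ℝ)..1, (max ((t:ℝ) - s) 0 *
        (f s * g (rexp (K * s) * y (projIcc 0 1 zero_le_one s))) - max ((t:ℝ) - s) 0 *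
        (f s * g (rexp (K * s) * z (projIcc 0 1 zero_le_one s)))) :=
      (intervalIntegral.integral_sub ((hJi y t).intervalIntegrable _ _)
        ((hJi z t).intervalIntegrable _ _)).symm
    rw [hsub]
    refine abs_integral_le_of_abs_le fun s hs ↦ ?_
    rw [← mul_sub, ← mul_sub, abs_mul, abs_mul, abs_of_nonneg (le_max_right _ _)]
    have h1 : |g (rexp (K * s) * y (projIcc 0 1 zero_le_one s)) -
        g (rexp (K * s) * z (projIcc 0 1 zero_le_one s))| ≤ L * (rexp (K * s) * dist y z) := by
      refine (hgL _ _).trans ?_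
      rw [← mul_sub, abs_mul, abs_exp]
      gcongr
      rw [← dist_eq]
      exact ContinuousMap.dist_apply_le_dist _
    -- `x e^{-Kx} ≤ 1/K`: this is the gain from the exponential weight.
    have h2 : max ((t:ℝ) - s) 0 * rexp (K * s) ≤ rexp (K * t) / K := by
      rw [le_div_iff₀ hKpos]
      have h3 : max ((t:ℝ) - s) 0 * K ≤ rexp (K * (t - s)) := by
        rcases max_cases ((t:ℝ) - s) 0 with ⟨h, -⟩ | ⟨h, -⟩ <;> rw [h]
        · linarith [add_one_le_exp (K * (t - s))]
        · simpa using (exp_pos _).le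
      calc _ = max ((t:ℝ) - s) 0 * K * rexp (K * s) := by ring
        _ ≤ rexp (K * (t - s)) * rexp (K * s) := by gcongr
        _ = _ := by rw [← exp_add]; ring_nf
    calc _ ≤ max ((t:ℝ) - s) 0 * (1 * (L * (rexp (K * s) * dist y z))) := by
          gcongr
          exact hf1 s
      _ = (max ((t:ℝ) - s) 0 * rexp (K * s)) * (L * dist y z) := by ring
      _ ≤ (rexp (K * t) / K) * (L * dist y z) := by gcongr
      _ = _ := by ring
  let Φ : P → C(Icc (0:ℝ) 1, ℝ) → C(Icc (0:ℝ) 1, ℝ) := fun p y ↦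
    ⟨fun t ↦ rexp (-(K * t)) * (α p * t - μ p * J y t), by
      have := hJ y
      fun_prop⟩
  have hΦc : ∀ p, ContractingWith (1/2) (Φ p) := fun p ↦ by
    refine ⟨by norm_num, LipschitzWith.of_dist_le_mul fun y z ↦ ?_⟩
    rw [ContinuousMap.dist_le (by positivity)]
    intro t
    rw [dist_eq]
    change |rexp (-(K * t)) * (α p * t - μ p * J y t) -
      rexp (-(K * t)) * (α p * t - μ p * J z t)| ≤ _
    have : rexp (-(K * t)) * (α p * t - μ p * J y t) -
      rexp (-(K * t)) * (α p * t - μ p * J z t) = rexp (-(K * t)) * -(μ p * (J y t - J z t)) := by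
      ring
    rw [this, abs_mul, abs_neg, abs_mul, abs_exp]
    calc _ ≤ rexp (-(K * t)) * (M * (rexp (K * t) * (L / K * dist y z))) := by
          gcongr
          · exact hμM p
          · exact hJL y z t
      _ = (rexp (-(K * t)) * rexp (K * t)) * ((M * L) / K * dist y z) := by ring
      _ = (M * L) / K * dist y z := by rw [← exp_add]; simp
      _ ≤ 1 / 2 * dist y z := by
          have : M * L / K ≤ 1 / 2 := by
            rw [div_le_iff₀ hKpos]; linarith
          exact mul_le_mul_of_nonneg_right this dist_nonneg
      _ = _ := by simp
  have hΦd : ∀ p q z, dist (Φ p z) (Φ q z) ≤ |α p - α q| + |μ p - μ q| * B := fun p q z ↦ by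
    have hB : 0 ≤ B := (abs_nonneg _).trans (hgB 0)
    rw [ContinuousMap.dist_le (by positivity)]
    intro t
    rw [dist_eq]
    change |rexp (-(K * t)) * (α p * t - μ p * J z t) -
      rexp (-(K * t)) * (α q * t - μ q * J z t)| ≤ _
    have : rexp (-(K * t)) * (α p * t - μ p * J z t) -
      rexp (-(K * t)) * (α q * t - μ q * J z t) =
        rexp (-(K * t)) * ((α p - α q) * t - (μ p - μ q) * J z t) := by
      ring
    have ht0 := t.2.1
    have ht1 := t.2.2
    rw [this, abs_mul, abs_exp]
    calc _ ≤ 1 * (|α p - α q| * 1 + |μ p - μ q| * B) := by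
          gcongr
          · exact exp_le_one_iff.mpr (by nlinarith)
          · refine (abs_sub _ _).trans ?_
            rw [abs_mul, abs_mul, abs_of_nonneg ht0]
            gcongr
            exact hJB z t
      _ = _ := by ring
  let E : C(Icc (0:ℝ) 1, ℝ) := ⟨fun t ↦ rexp (K * t), by fun_prop⟩
  let y : P → C(Icc (0:ℝ) 1, ℝ) := fun p ↦ ContractingWith.fixedPoint (Φ p) (hΦc p)
  have hy : Continuous y := by
    rw [continuous_iff_continuousAt]
    intro q
    rw [ContinuousAt, tendsto_iff_dist_tendsto_zero]
    have hlim : Filter.Tendsto (fun p ↦ 2 * (|α p - α q| + |μ p - μ q| * B)) (nhds q)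
        (nhds 0) := by
      have : Continuous fun p ↦ 2 * (|α p - α q| + |μ p - μ q| * B) := by fun_prop
      simpa using this.tendsto q
    refine squeeze_zero (fun _ ↦ dist_nonneg) (fun p ↦ ?_) hlim
    refine ((hΦc p).fixedPoint_lipschitz_in_map (hΦc q) (hΦd p q)).trans_eq ?_
    have : (((1/2 : NNReal)) : ℝ) = 1 / 2 := by simp
    rw [this]
    ring
  refine ⟨fun p ↦ E * y p, by fun_prop, fun p t ↦ ?_⟩
  have hfix : Φ p (y p) = y p := (hΦc p).fixedPoint_isFixedPt
  have h1 : y p t = rexp (-(K * t)) * (α p * t - μ p * J (y p) t) := by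
    conv_lhs => rw [← hfix]
    rfl
  have h2 : J (y p) t = ∫ s in (0:ℝ)..1, max ((t:ℝ) - s) 0 *
      (f s * g ((E * y p) (projIcc 0 1 zero_le_one s))) := by
    refine intervalIntegral.integral_congr fun s hs ↦ ?_
    rw [uIcc_of_le zero_le_one] at hs
    have : (E * y p) (projIcc 0 1 zero_le_one s) =
        rexp (K * s) * y p (projIcc 0 1 zero_le_one s) := by
      rw [projIcc_of_mem zero_le_one hs]; rfl
    simp only [this]
  rw [← h2, ContinuousMap.mul_apply, h1]
  change rexp (K * t) * _ = _
  rw [← mul_assoc, ← exp_add]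
  simp

/-! ### The lower bound at `t = 1/3` -/

lemma hasDerivAt_one_sub_mul_sin (s : ℝ) :
    HasDerivAt (fun s : ℝ ↦ -((1 - s) * cos (3 * π / 2 * s) / (3 * π / 2)) -
      sin (3 * π / 2 * s) / (3 * π / 2) ^ 2) ((1 - s) * sin (3 * π / 2 * s)) s := by
  have hpi := pi_pos
  have h1 : HasDerivAt (fun s : ℝ ↦ 3 * π / 2 * s) (3 * π / 2) s := by
    simpa using (hasDerivAt_id s).const_mul (3 * π / 2)
  have h2 : HasDerivAt (fun s : ℝ ↦ 1 - s) (-1) s := by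
    simpa using (hasDerivAt_id s).const_sub 1
  have := ((h2.mul h1.cos).div_const (3 * π / 2)).neg.sub (h1.sin.div_const ((3 * π / 2) ^ 2))
  refine this.congr_deriv ?_
  field_simp
  ring

lemma integral_one_sub_mul_sin_mid :
    ∫ s in (1/3:ℝ)..(2/3), (1 - s) * sin (3 * π / 2 * s) = 2 / (9 * π ^ 2) * (π + 2) := by
  have hpi := pi_pos
  rw [intervalIntegral.integral_eq_sub_of_hasDerivAt (fun s _ ↦ hasDerivAt_one_sub_mul_sin s)
    ((by fun_prop : Continuous fun s : ℝ ↦ (1 - s) * sin (3 * π / 2 * s)).intervalIntegrable _ _)]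
  rw [show 3 * π / 2 * (2 / 3) = π by ring, show 3 * π / 2 * (1 / 3) = π / 2 by ring]
  simp only [cos_pi, sin_pi, cos_pi_div_two, sin_pi_div_two]
  field_simp
  ring

lemma integral_one_sub_mul_sin_right :
    ∫ s in (2/3:ℝ)..1, (1 - s) * sin (3 * π / 2 * s) = -(2 / (9 * π ^ 2) * (π - 2)) := by
  have hpi := pi_pos
  rw [intervalIntegral.integral_eq_sub_of_hasDerivAt (fun s _ ↦ hasDerivAt_one_sub_mul_sin s)
    ((by fun_prop : Continuous fun s : ℝ ↦ (1 - s) * sin (3 * π / 2 * s)).intervalIntegrable _ _)]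
  rw [show 3 * π / 2 * (2 / 3) = π by ring, show 3 * π / 2 * 1 = π / 2 + π by ring]
  simp only [cos_pi, sin_pi, sin_add_pi, sin_pi_div_two]
  field_simp
  ring

/-- The smallness condition on `ρ` gives `e^{4ρ} < 4π/(π-2) < ((π+2)/(π-2))²`. -/
lemma exp_mul_lt {ρ : ℝ} (hρ : ρ < 1/4 * Real.log (4 * π / (π - 2))) :
    rexp ρ * (π - 2) < rexp (-ρ) * (π + 2) := by
  have hpi := pi_gt_three
  have hpi4 := pi_lt_four
  have hpos : 0 < π - 2 := by linarith
  have h4 : rexp (4 * ρ) < 4 * π / (π - 2) := by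
    rw [← lt_log_iff_exp_lt (by positivity)]; linarith
  rw [lt_div_iff₀ hpos] at h4
  have hsq : (rexp (2 * ρ) * (π - 2)) ^ 2 < (π + 2) ^ 2 := by
    calc (rexp (2 * ρ) * (π - 2)) ^ 2 = rexp (4 * ρ) * (π - 2) * (π - 2) := by
          rw [mul_pow, ← exp_nat_mul]; push_cast; ring_nf
      _ < 4 * π * (π - 2) := by gcongr
      _ < _ := by nlinarith
  have h2 := lt_of_pow_lt_pow_left₀ 2 (by linarith) hsq
  calc rexp ρ * (π - 2) = rexp (-ρ) * (rexp (2 * ρ) * (π - 2)) := by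
        rw [← mul_assoc, ← exp_add]; ring_nf
    _ < _ := by gcongr

/-- Lower bound for `∫ k(1/3, s) sin(3πs/2) w(s) ds`, the Green's function being written
`k(t, s) = t(1-s) - max (t-s) 0`: drop the nonnegative contribution of `[0, 1/3]`, and bound `w`
below by `e^{-ρ}` on `[1/3, 2/3]`, where the sine is nonnegative, and above by `e^ρ` on `[2/3, 1]`,
where it is nonpositive. -/
lemma le_integral_green {ρ : ℝ} {w : ℝ → ℝ} (hw : Continuous w) (hlo : ∀ s, rexp (-ρ) ≤ w s)
    (hhi : ∀ s, w s ≤ rexp ρ) :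
    2 / (27 * π ^ 2) * (rexp (-ρ) * (π + 2) - rexp ρ * (π - 2)) ≤
      ∫ s in (0:ℝ)..1, (1/3 * (1 - s) - max (1/3 - s) 0) * (sin (3 * π / 2 * s) * w s) := by
  have hpi := pi_pos
  have hc : Continuous fun s : ℝ ↦
    (1/3 * (1 - s) - max (1/3 - s) 0) * (sin (3 * π / 2 * s) * w s) := by fun_prop
  have hi := fun a b : ℝ ↦ hc.intervalIntegrable (μ := volume) a b
  rw [← intervalIntegral.integral_add_adjacent_intervals (hi 0 (1/3)) (hi (1/3) 1),
    ← intervalIntegral.integral_add_adjacent_intervals (hi (1/3) (2/3)) (hi (2/3) 1)]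
  have h1 : 0 ≤ ∫ s in (0:ℝ)..(1/3),
      (1/3 * (1 - s) - max (1/3 - s) 0) * (sin (3 * π / 2 * s) * w s) := by
    refine intervalIntegral.integral_nonneg (by norm_num) fun s hs ↦ ?_
    have hs0 := hs.1
    have hs1 := hs.2
    have hsin : 0 ≤ sin (3 * π / 2 * s) :=
      sin_nonneg_of_nonneg_of_le_pi (by positivity) (by nlinarith)
    have hw0 : 0 ≤ w s := (exp_pos _).le.trans (hlo s)
    rw [max_eq_left (by linarith)]
    exact mul_nonneg (by linarith) (mul_nonneg hsin hw0)
  have h2 : rexp (-ρ) / 3 * (2 / (9 * π ^ 2) * (π + 2)) ≤ ∫ s in (1/3:ℝ)..(2/3),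
      (1/3 * (1 - s) - max (1/3 - s) 0) * (sin (3 * π / 2 * s) * w s) := by
    rw [← integral_one_sub_mul_sin_mid, ← intervalIntegral.integral_const_mul]
    refine intervalIntegral.integral_mono_on (by norm_num)
      ((by fun_prop : Continuous _).intervalIntegrable _ _) (hi _ _) fun s hs ↦ ?_
    have hs0 := hs.1
    have hs1 := hs.2
    have hsin : 0 ≤ sin (3 * π / 2 * s) :=
      sin_nonneg_of_nonneg_of_le_pi (by positivity) (by nlinarith)
    rw [max_eq_right (by linarith)]
    have := mul_le_mul_of_nonneg_left (hlo s) (mul_nonneg (by linarith : 0 ≤ 1 - s) hsin)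
    linarith
  have h3 : rexp ρ / 3 * -(2 / (9 * π ^ 2) * (π - 2)) ≤ ∫ s in (2/3:ℝ)..1,
      (1/3 * (1 - s) - max (1/3 - s) 0) * (sin (3 * π / 2 * s) * w s) := by
    rw [← integral_one_sub_mul_sin_right, ← intervalIntegral.integral_const_mul]
    refine intervalIntegral.integral_mono_on (by norm_num)
      ((by fun_prop : Continuous _).intervalIntegrable _ _) (hi _ _) fun s hs ↦ ?_
    have hs0 := hs.1
    have hs1 := hs.2
    have hsin : 0 ≤ -sin (3 * π / 2 * s) := by
      rw [← sin_sub_pi]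
      calc 0 ≤ sin (3 * π / 2 * s - π) :=
            sin_nonneg_of_nonneg_of_le_pi (by nlinarith) (by nlinarith)
        _ = _ := by rfl
    rw [max_eq_right (by linarith)]
    have := mul_le_mul_of_nonneg_left (hhi s) (mul_nonneg (by linarith : 0 ≤ 1 - s) hsin)
    linarith
  calc _ = 0 + (rexp (-ρ) / 3 * (2 / (9 * π ^ 2) * (π + 2)) +
        rexp ρ / 3 * -(2 / (9 * π ^ 2) * (π - 2))) := by
        field_simp; ring
    _ ≤ _ := by gcongr

/-! ### The truncated exponential -/

/-- The exponential with its argument truncated to `[-ρ, ρ]`. -/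
noncomputable def truncExp (ρ x : ℝ) : ℝ := rexp (max (-ρ) (min x ρ))

lemma continuous_truncExp (ρ : ℝ) : Continuous (truncExp ρ) := by
  unfold truncExp; fun_prop

lemma le_truncExp (ρ x : ℝ) : rexp (-ρ) ≤ truncExp ρ x := exp_le_exp.mpr (le_max_left _ _)

lemma truncExp_le {ρ : ℝ} (hρ : 0 ≤ ρ) (x : ℝ) : truncExp ρ x ≤ rexp ρ :=
  exp_le_exp.mpr (max_le (by linarith) (min_le_right _ _))

lemma truncExp_eq {ρ x : ℝ} (h : |x| ≤ ρ) : truncExp ρ x = rexp x := by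
  rw [abs_le] at h
  rw [truncExp, min_eq_left h.2, max_eq_right h.1]

lemma abs_truncExp_sub_le {ρ : ℝ} (hρ : 0 ≤ ρ) (x y : ℝ) :
    |truncExp ρ x - truncExp ρ y| ≤ rexp ρ * |x - y| := by
  have key : ∀ a b : ℝ, a ≤ ρ → rexp a - rexp b ≤ rexp ρ * |a - b| := fun a b ha ↦ by
    have h1 : rexp b = rexp a * rexp (b - a) := by rw [← exp_add]; ring_nf
    calc rexp a - rexp b = rexp a * (1 - rexp (b - a)) := by rw [h1]; ring
      _ ≤ rexp a * |a - b| := by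
          gcongr; linarith [add_one_le_exp (b - a), le_abs_self (a - b)]
      _ ≤ _ := by gcongr
  have hle : ∀ x, max (-ρ) (min x ρ) ≤ ρ := fun x ↦ max_le (by linarith) (min_le_right _ _)
  have hlip : |max (-ρ) (min x ρ) - max (-ρ) (min y ρ)| ≤ |x - y| := by
    refine (abs_max_sub_max_le_max _ _ _ _).trans ?_
    refine max_le (by simp) ((abs_min_sub_min_le_max _ _ _ _).trans ?_)
    simp
  refine le_trans ?_ (mul_le_mul_of_nonneg_left hlip (exp_pos ρ).le)
  refine abs_le'.mpr ⟨key _ _ (hle x), ?_⟩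
  rw [neg_sub, abs_sub_comm]
  exact key _ _ (hle y)

/-! ### Shooting -/

/-- The problem without the nonlocal denominator, for either sign `σ` of the parameter. -/
theorem exists_solution_of_norm {ρ : ℝ} (hρ : 0 < ρ)
    (hρ' : ρ < 1/4 * Real.log (4 * π / (π - 2))) {σ : ℝ} (hσ : |σ| = 1) :
    ∃ m : ℝ, 0 < m ∧ ∃ u : C(Icc (0:ℝ) 1, ℝ), ‖u‖ = ρ ∧ ∀ t : Icc (0:ℝ) 1, u t = σ * m *
      ∫ s in (0:ℝ)..1, (t * (1 - s) - max (t - s) 0) *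
        (sin (3 * π / 2 * s) * rexp (u (projIcc 0 1 zero_le_one s))) := by
  have hpi := pi_pos
  set m₀ := 2 / (27 * π ^ 2) * (rexp (-ρ) * (π + 2) - rexp ρ * (π - 2))
  have hm₀ : 0 < m₀ := mul_pos (by positivity) (sub_pos.mpr (exp_mul_lt hρ'))
  set M := (ρ + 1) / m₀
  have hM : 0 < M := by positivity
  set A := M * rexp ρ + 1
  -- Shooting parameters `p = (x, y)`: slope `a = A (2x - 1)` and `μ = σ M c(y)`, with `c` the
  -- retraction onto `[0, 1]`, so that the sides of the unit square carry the boundary conditions.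
  let c : ℝ → ℝ := fun y ↦ max 0 (min y 1)
  have hc0 : ∀ y, 0 ≤ c y := fun y ↦ le_max_left _ _
  have hc1 : ∀ y, c y ≤ 1 := fun y ↦ max_le zero_le_one (min_le_right _ _)
  have hcc : Continuous c := by fun_prop
  have hμM : ∀ p : ℝ × ℝ, |σ * (M * c p.2)| ≤ M := fun p ↦ by
    rw [abs_mul, hσ, one_mul, abs_of_nonneg (mul_nonneg hM.le (hc0 _))]
    exact mul_le_of_le_one_right hM.le (hc1 _)
  have habs : ∀ x, |truncExp ρ x| ≤ rexp ρ := fun x ↦ by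
    rw [abs_of_nonneg ((exp_pos _).le.trans (le_truncExp ρ x))]; exact truncExp_le hρ.le x
  have hproj : Continuous (projIcc (0:ℝ) 1 zero_le_one) := continuous_projIcc
  have hgc := continuous_truncExp ρ
  obtain ⟨U, hUc, hU⟩ := exists_volterra (f := fun s ↦ sin (3 * π / 2 * s)) (by fun_prop) hgc
    (fun s ↦ abs_sin_le_one _) habs (exp_pos ρ).le (abs_truncExp_sub_le hρ.le)
    (α := fun p : ℝ × ℝ ↦ A * (2 * p.1 - 1)) (μ := fun p : ℝ × ℝ ↦ σ * (M * c p.2))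
    (by fun_prop) (by fun_prop) hμM hM.le
  let one : Icc (0:ℝ) 1 := ⟨1, by norm_num⟩
  let ι : C(Icc (0:ℝ) 1, ℝ) := ⟨fun t ↦ t, by fun_prop⟩
  let v : ℝ × ℝ → C(Icc (0:ℝ) 1, ℝ) := fun p ↦ U p - U p one • ι
  have hevc : Continuous fun p ↦ U p one := by fun_prop
  have hvc : Continuous v := by fun_prop
  have hv : ∀ p (t : Icc (0:ℝ) 1), v p t = σ * (M * c p.2) * ∫ s in (0:ℝ)..1,
      (t * (1 - s) - max (t - s) 0) *
        (sin (3 * π / 2 * s) * truncExp ρ (U p (projIcc 0 1 zero_le_one s))) := fun p t ↦ by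
    have h1 : v p t = U p t - U p one * t := rfl
    have hsplit : (∫ s in (0:ℝ)..1, (t * (1 - s) - max (t - s) 0) *
        (sin (3 * π / 2 * s) * truncExp ρ (U p (projIcc 0 1 zero_le_one s)))) =
        t * (∫ s in (0:ℝ)..1, max (1 - s) 0 *
          (sin (3 * π / 2 * s) * truncExp ρ (U p (projIcc 0 1 zero_le_one s)))) -
        ∫ s in (0:ℝ)..1, max (t - s) 0 *
          (sin (3 * π / 2 * s) * truncExp ρ (U p (projIcc 0 1 zero_le_one s))) := by
      rw [← intervalIntegral.integral_const_mul, ← intervalIntegral.integral_sub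
        ((by fun_prop : Continuous _).intervalIntegrable _ _)
        ((by fun_prop : Continuous _).intervalIntegrable _ _)]
      refine intervalIntegral.integral_congr fun s hs ↦ ?_
      rw [uIcc_of_le zero_le_one] at hs
      simp only [max_eq_left (sub_nonneg.mpr hs.2)]
      ring
    rw [h1, hU, hU, hsplit]
    simp only [one]
    ring
  have hA : ∀ p, |σ * (M * c p.2) * ∫ s in (0:ℝ)..1, max (1 - s) 0 *
      (sin (3 * π / 2 * s) * truncExp ρ (U p (projIcc 0 1 zero_le_one s)))| < A := fun p ↦ by
    have hint : |∫ s in (0:ℝ)..1, max (1 - s) 0 *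
      (sin (3 * π / 2 * s) * truncExp ρ (U p (projIcc 0 1 zero_le_one s)))| ≤ rexp ρ := by
      refine abs_integral_le_of_abs_le fun s hs ↦ ?_
      rw [abs_mul, abs_mul, abs_of_nonneg (le_max_right _ _)]
      calc _ ≤ 1 * (1 * rexp ρ) := by
            gcongr
            · exact max_le (by linarith [hs.1]) zero_le_one
            · exact abs_sin_le_one _
            · exact habs _
        _ = _ := by ring
    rw [abs_mul]
    have := mul_le_mul (hμM p) hint (abs_nonneg _) hM.le
    exact this.trans_lt (lt_add_one _)
  have hF : ∀ p, U p one = A * (2 * p.1 - 1) - σ * (M * c p.2) * ∫ s in (0:ℝ)..1, max (1 - s) 0 *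
      (sin (3 * π / 2 * s) * truncExp ρ (U p (projIcc 0 1 zero_le_one s))) := fun p ↦ by
    rw [hU]; simp only [one, mul_one]
  have hv0 : ∀ p, c p.2 = 0 → ‖v p‖ = 0 := fun p hp ↦ by
    have : v p = 0 := by ext t; rw [hv, hp]; simp
    rw [this, norm_zero]
  obtain ⟨p, hFp, hGp⟩ := exists_common_zero (F := fun p ↦ U p one) (G := fun p ↦ ‖v p‖ - ρ)
    hevc (by fun_prop)
    (fun y ↦ by
      have := hA (0, y)
      rw [abs_lt] at this
      rw [hF]; simp only at this ⊢; linarith)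
    (fun y ↦ by
      have := hA (1, y)
      rw [abs_lt] at this
      rw [hF]; simp only at this ⊢; linarith)
    (fun x ↦ by
      rw [hv0 (x, 0) (by simp [c])]; linarith)
    (fun x ↦ by
      let third : Icc (0:ℝ) 1 := ⟨1/3, by norm_num⟩
      have hlow := le_integral_green (w := fun s ↦ truncExp ρ (U (x, 1) (projIcc 0 1 zero_le_one s)))
        (by fun_prop) (fun s ↦ le_truncExp ρ _) (fun s ↦ truncExp_le hρ.le _)
      have h1 : M * m₀ ≤ |v (x, 1) third| := by
        rw [hv, abs_mul, abs_mul, hσ, one_mul, show c (x, (1:ℝ)).2 = 1 by simp [c], mul_one,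
          abs_of_pos hM]
        gcongr
        exact hlow.trans (le_abs_self _)
      have h2 : M * m₀ = ρ + 1 := div_mul_cancel₀ _ hm₀.ne'
      have h3 : |v (x, 1) third| ≤ ‖v (x, 1)‖ := (v (x, 1)).norm_coe_le_norm third
      linarith)
  -- At the common zero `u(1) = 0`, hence `v = u` and `|u| ≤ ρ`, where `truncExp ρ = exp`.
  have hvU : v p = U p := by
    simp [v, hFp]
  have hnorm : ‖v p‖ = ρ := sub_eq_zero.mp hGp
  refine ⟨M * c p.2, mul_pos hM ((hc0 _).lt_of_ne' fun h ↦ ?_), U p, hvU ▸ hnorm, fun t ↦ ?_⟩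
  · exact hρ.ne' (hnorm.symm.trans (hv0 p h))
  · conv_lhs => rw [← hvU]
    rw [hv]
    congr 1
    refine intervalIntegral.integral_congr fun s _ ↦ ?_
    have : |U p (projIcc 0 1 zero_le_one s)| ≤ ρ := by
      rw [← hnorm, hvU]; exact (U p).norm_coe_le_norm _
    simp only [truncExp_eq this]

theorem dirichlet_bvp_eigenvalues
    (ρ : ℝ) (hρ : 0 < ρ) (hρ' : ρ < 1/4 * Real.log (4 * π / (π - 2)))
    (k : ℝ → ℝ → ℝ)
    (hk : ∀ t s : ℝ, k t s = if t ≤ s then t * (1 - s) else s * (1 - t)) :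
    ∃ lamp lamn : ℝ, 0 < lamp ∧ lamn < 0 ∧
      ∃ up un : C(Set.Icc (0:ℝ) 1, ℝ), ‖up‖ = ρ ∧ ‖un‖ = ρ ∧
        (∀ t : Set.Icc (0:ℝ) 1, up t = lamp *
          ∫ s in (0:ℝ)..1, k (t:ℝ) s *
            (Real.sin (3 * π / 2 * s) * Real.exp (up (Set.projIcc 0 1 zero_le_one s)) /
              ∫ x in (0:ℝ)..1, Real.exp (up (Set.projIcc 0 1 zero_le_one x)))) ∧
        (∀ t : Set.Icc (0:ℝ) 1, un t = lamn *
          ∫ s in (0:ℝ)..1, k (t:ℝ) s *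
            (Real.sin (3 * π / 2 * s) * Real.exp (un (Set.projIcc 0 1 zero_le_one s)) /
              ∫ x in (0:ℝ)..1, Real.exp (un (Set.projIcc 0 1 zero_le_one x)))) := by
  have hk' : ∀ t s : ℝ, k t s = t * (1 - s) - max (t - s) 0 := fun t s ↦ by
    rw [hk]
    split_ifs with h
    · rw [max_eq_right (by linarith)]; ring
    · rw [max_eq_left (by linarith)]; ring
  have hproj : Continuous (projIcc (0:ℝ) 1 zero_le_one) := continuous_projIcc
  have hZ : ∀ u : C(Icc (0:ℝ) 1, ℝ),
      0 < ∫ x in (0:ℝ)..1, rexp (u (projIcc 0 1 zero_le_one x)) := fun u ↦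
    intervalIntegral.intervalIntegral_pos_of_pos
      ((by fun_prop : Continuous _).intervalIntegrable _ _) (fun _ ↦ exp_pos _) one_pos
  have main : ∀ σ : ℝ, |σ| = 1 → ∃ m Z : ℝ, 0 < m ∧ 0 < Z ∧ ∃ u : C(Icc (0:ℝ) 1, ℝ), ‖u‖ = ρ ∧
      ∀ t : Icc (0:ℝ) 1, u t = σ * (m * Z) * ∫ s in (0:ℝ)..1, k (t:ℝ) s *
        (sin (3 * π / 2 * s) * rexp (u (projIcc 0 1 zero_le_one s)) /
          ∫ x in (0:ℝ)..1, rexp (u (projIcc 0 1 zero_le_one x))) := fun σ hσ ↦ by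
    obtain ⟨m, hm, u, hu, hsol⟩ := exists_solution_of_norm hρ hρ' hσ
    refine ⟨m, _, hm, hZ u, u, hu, fun t ↦ ?_⟩
    rw [hsol t]
    simp only [hk', ← mul_div_assoc, intervalIntegral.integral_div]
    have key : ∀ I Z : ℝ, Z ≠ 0 → σ * m * I = σ * (m * Z) * I / Z := fun I Z hZ0 ↦ by
      field_simp
    exact key _ _ (hZ u).ne'
  obtain ⟨m, Z, hm, hZ, u, hu, hsol⟩ := main 1 (by simp)
  obtain ⟨m', Z', hm', hZ', u', hu', hsol'⟩ := main (-1) (by simp)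
  exact ⟨1 * (m * Z), -1 * (m' * Z'), by positivity, by have := mul_pos hm' hZ'; linarith,
    u, u', hu, hu', hsol, hsol'⟩
end
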